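/- Let φ and ψ be linear fractional self-maps of the unit ball B_N. Then C_φ − C_ψ is compact on the Dirichlet space D(B_N) if and only if φ = ψ or both C_φ and C_ψ are compact on D(B_N) (equivalently, φ = ψ or both ‖φ‖_∞ < 1 and ‖ψ‖_∞ < 1, where ‖φ‖_∞ = sup_{z∈B_N}|φ(z)|). -/

import Mathlib

open Filter MeasureTheory Metric Set
open scoped ComplexInnerProductSpace Topology

noncomputable section

/-- Borel measurable structure on `ℂ^N`. -/
instance (N : ℕ) : MeasurableSpace (EuclideanSpace ℂ (Fin N)) := borel _

instance (N : ℕ) : BorelSpace (EuclideanSpace ℂ (Fin N)) := ⟨rfl⟩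

/-- The open unit ball `B_N` of `ℂ^N`. -/
abbrev Ball (N : ℕ) : Set (EuclideanSpace ℂ (Fin N)) := Metric.ball 0 1

/-- An abstract presentation of the Dirichlet space `𝒟(B_N)`: the reproducing-kernel Hilbert
space of holomorphic functions on `B_N` with kernel `K_w(z) = 1 + log (1/(1 - ⟨z,w⟩))`.
Injectivity of evaluation forces the kernels to be total, so such a structure determines the
space uniquely up to canonical unitary equivalence. -/
structure DirichletSpace (N : ℕ) where
  (H : Type)
  [grp : NormedAddCommGroup H]
  [ips : InnerProductSpace ℂ H]
  [cpl : CompleteSpace H]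
  eval : H → EuclideanSpace ℂ (Fin N) → ℂ
  eval_add : ∀ f g : H, ∀ z, eval (f + g) z = eval f z + eval g z
  eval_smul : ∀ (c : ℂ) (f : H) (z : EuclideanSpace ℂ (Fin N)), eval (c • f) z = c * eval f z
  holo : ∀ f : H, DifferentiableOn ℂ (eval f) (Ball N)
  eval_injective : ∀ f g : H, (∀ z ∈ Ball N, eval f z = eval g z) → f = g
  kernel : EuclideanSpace ℂ (Fin N) → H
  eval_kernel : ∀ w ∈ Ball N, ∀ z ∈ Ball N,
    eval (kernel w) z = 1 + Complex.log (1 - ⟪w, z⟫)⁻¹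
  reproducing : ∀ (f : H), ∀ w ∈ Ball N, ⟪kernel w, f⟫ = eval f w

attribute [instance] DirichletSpace.grp DirichletSpace.ips DirichletSpace.cpl

/-- `T` is the composition operator `C_φ : f ↦ f ∘ φ` on `S`. -/
def DirichletSpace.IsCompositionOperator {N : ℕ} (S : DirichletSpace N)
    (φ : EuclideanSpace ℂ (Fin N) → EuclideanSpace ℂ (Fin N)) (T : S.H →L[ℂ] S.H) : Prop :=
  ∀ f : S.H, ∀ z ∈ Ball N, S.eval (T f) z = S.eval f (φ z)

/-- The data of a linear fractional map `φ(z) = (Az + B)/(⟨z,C⟩ + d)` of `ℂ^N`. -/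
structure BallLFT (N : ℕ) where
  A : Matrix (Fin N) (Fin N) ℂ
  B : EuclideanSpace ℂ (Fin N)
  C : EuclideanSpace ℂ (Fin N)
  d : ℂ

/-- The map `z ↦ (Az + B)/(⟨z,C⟩ + d)` associated to a linear fractional map. -/
def BallLFT.toFun {N : ℕ} (L : BallLFT N) (z : EuclideanSpace ℂ (Fin N)) :
    EuclideanSpace ℂ (Fin N) :=
  (⟪L.C, z⟫ + L.d)⁻¹ •
    ((WithLp.equiv 2 (Fin N → ℂ)).symm (L.A.mulVec (WithLp.equiv 2 (Fin N → ℂ) z)) + L.B)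

/-- The Krein adjoint `σ(z) = (A*z - C)/(⟨z,-B⟩ + conj d)` of a linear fractional map. -/
def BallLFT.krein {N : ℕ} (L : BallLFT N) : BallLFT N :=
  ⟨L.A.conjTranspose, -L.C, -L.B, (starRingEnd ℂ) L.d⟩

/-- `L` is a linear fractional self-map of the unit ball `B_N`. -/
def BallLFT.IsSelfMap {N : ℕ} (L : BallLFT N) : Prop :=
  (∀ z ∈ Ball N, ⟪L.C, z⟫ + L.d ≠ 0) ∧ Set.MapsTo L.toFun (Ball N) (Ball N)

/-- `‖φ‖_∞ = sup_{z ∈ B_N} |φ(z)|`. -/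
def supNorm {N : ℕ} (φ : EuclideanSpace ℂ (Fin N) → EuclideanSpace ℂ (Fin N)) : ℝ :=
  sSup ((fun z => ‖φ z‖) '' Ball N)

/-!
A linear fractional map lifts to a linear map on the homogeneous coordinates `ℂ × ℂ^N`, and up to
normalizing terms `⟨K_z, K_w⟩` is minus the logarithm of an indefinite Hermitian form `[·, ·]`.

If `‖φ‖_∞ = 1` and `φ` is not constant, some `ζ` in the unit sphere is mapped to the unit sphere.
Let `U_t` be the parabolic one-parameter group at `ζ`. The differences `K_{U_t z} - K_{U_t w}` have
constant norm and converge weakly to `0`, so `C_φ^* - C_ψ^*`, if compact, sends them to vectors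
tending to `0`. Their images under `C_φ^*` have constant norm, and the inner products of these with
the images under `C_ψ^*` are combinations of logarithms of `|[φ U_t p, ψ U_t q]|`, polynomials of
degree at most two in `t`. When the degree is positive, the leading coefficients factor into a
function of `p` and one of `q`, so the inner products tend to `0` and the images under `C_φ^*`
vanish. When the degree is zero, nothing depends on `t`, so
`K_{φ(z)} + K_{ψ(w)} = K_{ψ(z)} + K_{φ(w)}`, whence `φ(z) = ψ(z)` or `φ(z) = φ(w)`. Unless `φ = ψ`,
both cases make `φ` constant, a contradiction.

Conversely, if `‖φ‖_∞ < s < 1`, then `C_φ` factors through the dilation operator `f ↦ f(s ·)`, which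
is compact. The other factor `C_{φ/s}` is bounded by Lax's symmetrization argument, applied to `φ/s`
and its Krein adjoint.
-/

section LogConvex

variable {a : ℕ → ℝ}

theorem mul_le_mul_of_forall_sq_le_mul (ha : ∀ n, 0 ≤ a n)
    (hconv : ∀ n, a (n + 1) ^ 2 ≤ a (n + 2) * a n) (n : ℕ) : a 1 * a n ≤ a (n + 1) * a 0 := by
  induction n with
  | zero => rfl
  | succ n ih =>
    rcases (ha n).eq_or_lt with hzero | hpos
    · have hsq : a (n + 1) ^ 2 ≤ 0 := by simpa only [← hzero, mul_zero] using hconv n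
      rw [pow_eq_zero_iff two_ne_zero |>.1 (hsq.antisymm (sq_nonneg _)), mul_zero]
      exact mul_nonneg (ha _) (ha _)
    · refine le_of_mul_le_mul_right ?_ hpos
      calc a 1 * a (n + 1) * a n = a (n + 1) * (a 1 * a n) := by ring
        _ ≤ a (n + 1) * (a (n + 1) * a 0) := mul_le_mul_of_nonneg_left ih (ha _)
        _ = a (n + 1) ^ 2 * a 0 := by ring
        _ ≤ a (n + 2) * a n * a 0 := mul_le_mul_of_nonneg_right (hconv n) (ha 0)
        _ = a (n + 2) * a 0 * a n := by ring

theorem le_of_forall_sq_le_mul_of_bddAbove (ha : ∀ n, 0 ≤ a n)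
    (hconv : ∀ n, a (n + 1) ^ 2 ≤ a (n + 2) * a n) (hbdd : BddAbove (range a)) : a 1 ≤ a 0 := by
  obtain ⟨C, hC⟩ := hbdd
  by_contra! hlt
  have hpos : 0 < a 0 := by
    refine (ha 0).lt_of_ne fun hzero => hlt.not_ge ?_
    have hsq : a 1 ^ 2 ≤ 0 := by simpa only [← hzero, mul_zero] using hconv 0
    rw [pow_eq_zero_iff two_ne_zero |>.1 (hsq.antisymm (sq_nonneg _))]
    exact ha 0
  have hgrow : ∀ n, (a 1 / a 0) ^ n * a 0 ≤ a n := by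
    intro n
    induction n with
    | zero => simp
    | succ n ih =>
      calc (a 1 / a 0) ^ (n + 1) * a 0 = a 1 / a 0 * ((a 1 / a 0) ^ n * a 0) := by ring
        _ ≤ a 1 / a 0 * a n := mul_le_mul_of_nonneg_left ih (div_nonneg (ha 1) hpos.le)
        _ = a 1 * a n / a 0 := by ring
        _ ≤ a (n + 1) := (div_le_iff₀ hpos).2 (mul_le_mul_of_forall_sq_le_mul ha hconv n)
  obtain ⟨n, hn⟩ := pow_unbounded_of_one_lt (C / a 0) ((one_lt_div hpos).2 hlt)
  exact ((div_lt_iff₀ hpos).1 hn).not_ge ((hgrow n).trans (hC ⟨n, rfl⟩))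

end LogConvex

section InnerProduct

variable {𝕜 E F : Type*} [RCLike 𝕜] [NormedAddCommGroup E] [InnerProductSpace 𝕜 E]
  [NormedAddCommGroup F] [InnerProductSpace 𝕜 F]

theorem norm_sq_le_of_inner_self_eq {x : F} {y z : E} (h : inner 𝕜 x x = inner 𝕜 y z) :
    ‖x‖ ^ 2 ≤ ‖y‖ * ‖z‖ := by
  have hnorm : ‖x‖ ^ 2 = ‖inner 𝕜 y z‖ := by
    rw [← h, inner_self_eq_norm_sq_to_K, norm_pow, RCLike.norm_ofReal, abs_norm]
  exact hnorm.trans_le (norm_inner_le_norm y z)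

/- Log-convexity of `n ↦ ‖L (Aⁿ x)‖` turns boundedness of the iterates into a bound by `1`. -/
theorem norm_le_of_symmetric_of_bddAbove_iterates {V : Type*} [AddCommGroup V] [Module 𝕜 V]
    {L : V →ₗ[𝕜] E} {A : V →ₗ[𝕜] V}
    (hsymm : ∀ x y, inner 𝕜 (L (A x)) (L y) = inner 𝕜 (L x) (L (A y)))
    (hbdd : ∀ x, BddAbove (range fun n : ℕ => ‖L ((A ^ n) x)‖)) (x : V) :
    ‖L (A x)‖ ≤ ‖L x‖ := by
  have hconv (n : ℕ) : ‖L ((A ^ (n + 1)) x)‖ ^ 2 ≤ ‖L ((A ^ (n + 2)) x)‖ * ‖L ((A ^ n) x)‖ := by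
    refine norm_sq_le_of_inner_self_eq (𝕜 := 𝕜) ?_
    rw [pow_succ' A (n + 1), Module.End.mul_apply, hsymm, ← Module.End.mul_apply, ← pow_succ']
  simpa using le_of_forall_sq_le_mul_of_bddAbove (fun n => norm_nonneg _) hconv (hbdd x)

theorem inner_linearCombination_congr {ι κ : Type*} {u : ι → E} {v : κ → E} {u' : ι → F}
    {v' : κ → F} (h : ∀ i j, inner 𝕜 (u i) (v j) = inner 𝕜 (u' i) (v' j)) (x : ι →₀ 𝕜)
    (y : κ →₀ 𝕜) :
    inner 𝕜 (Finsupp.linearCombination 𝕜 u x) (Finsupp.linearCombination 𝕜 v y) =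
      inner 𝕜 (Finsupp.linearCombination 𝕜 u' x) (Finsupp.linearCombination 𝕜 v' y) := by
  simp only [Finsupp.linearCombination_apply, Finsupp.sum_inner, Finsupp.inner_sum,
    inner_smul_left, inner_smul_right, h]

theorem eq_smul_of_inner_eq {η x : E} {c : 𝕜} (hη : ‖η‖ = 1) (hx : ‖x‖ ≤ ‖c‖)
    (h : inner 𝕜 η x = c) : x = c • η := by
  have hη0 : η ≠ 0 := norm_ne_zero_iff.1 (hη ▸ one_ne_zero)
  have hnorm : ‖inner 𝕜 η x‖ = ‖η‖ * ‖x‖ := by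
    refine (norm_inner_le_norm η x).antisymm ?_
    rwa [hη, one_mul, h]
  rcases eq_or_ne x 0 with rfl | hx0
  · simp only [inner_zero_right] at h
    simp [← h]
  obtain ⟨r, -, hr⟩ := (norm_inner_eq_norm_iff hη0 hx0).1 hnorm
  have hrc : r = c := by
    simpa [hr, inner_smul_right, inner_self_eq_norm_sq_to_K, hη] using h
  rw [hr, hrc]

theorem eq_zero_or_eq_zero_of_forall_inner_mul_inner {p q : E}
    (h : ∀ x, inner 𝕜 p x * inner 𝕜 q x = 0) : p = 0 ∨ q = 0 := by
  by_contra! hne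
  obtain ⟨hp, hq⟩ := hne
  have hqp : inner 𝕜 q p = 0 :=
    (mul_eq_zero.1 (h p)).resolve_left (inner_self_ne_zero.2 hp)
  have hpq : inner 𝕜 p q = 0 := by rw [← inner_conj_symm, hqp, map_zero]
  have := h (p + q)
  simp only [inner_add_right, hqp, hpq, add_zero, zero_add, mul_eq_zero, inner_self_eq_zero] at this
  exact this.elim hp hq

theorem tendsto_inner_of_dense_span {ι : Type*} {l : Filter ι} {x : ι → E} {C : ℝ}
    (hbdd : ∀ i, ‖x i‖ ≤ C) {s : Set E} (hs : Dense (Submodule.span 𝕜 s : Set E))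
    (h : ∀ y ∈ s, Tendsto (fun i => inner 𝕜 y (x i)) l (𝓝 0)) (y : E) :
    Tendsto (fun i => inner 𝕜 y (x i)) l (𝓝 0) := by
  have hequi : Equicontinuous fun i y => inner 𝕜 y (x i) := by
    refine (LipschitzWith.uniformEquicontinuous _ C.toNNReal fun i =>
      LipschitzWith.of_dist_le_mul fun y z => ?_).equicontinuous
    rw [dist_eq_norm, ← inner_sub_left, dist_eq_norm, mul_comm]
    refine (norm_inner_le_norm _ _).trans ?_
    exact mul_le_mul_of_nonneg_left ((hbdd i).trans (Real.le_coe_toNNReal C)) (norm_nonneg _)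
  refine (hequi y).tendsto_of_mem_closure tendsto_const_nhds (fun z hz => ?_) (hs y)
  induction hz using Submodule.span_induction with
  | mem z hz => exact h z hz
  | zero => simpa only [inner_zero_left] using tendsto_const_nhds
  | add z w _ _ hz hw => simpa only [inner_add_left, add_zero] using hz.add hw
  | smul c z _ hz =>
    simpa only [inner_smul_left, mul_zero] using hz.const_mul (starRingEnd 𝕜 c)

open ContinuousLinearMap in
theorem tendsto_adjoint_of_isCompactOperator [CompleteSpace E] [CompleteSpace F] {T : E →L[𝕜] F}
    (hT : IsCompactOperator T) {ι : Type*} {l : Filter ι} {x : ι → F} {C : ℝ}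
    (hbdd : ∀ i, ‖x i‖ ≤ C) (hx : ∀ y, Tendsto (fun i => inner 𝕜 y (x i)) l (𝓝 0)) :
    Tendsto (fun i => adjoint T (x i)) l (𝓝 0) := by
  obtain ⟨K, hK, hTK⟩ := hT.image_closedBall_subset_compact (‖adjoint T‖ * C)
  have hmem (i : ι) : T (adjoint T (x i)) ∈ K := by
    refine hTK (mem_image_of_mem T (mem_closedBall_zero_iff.2 ?_))
    exact (adjoint T).le_of_opNorm_le_of_le le_rfl (hbdd i)
  refine tendsto_iff_ultrafilter _ _ _ |>.2 fun g hg => ?_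
  obtain ⟨y, -, hy⟩ := hK.ultrafilter_le_nhds (g.map fun i => T (adjoint T (x i)))
    (le_principal_iff.2 (Ultrafilter.mem_map.2 (univ_mem' hmem)))
  have hsub : Tendsto (fun i => inner 𝕜 (T (adjoint T (x i)) - y) (x i)) g (𝓝 0) := by
    have hlim : Tendsto (fun i => ‖T (adjoint T (x i)) - y‖ * C) g (𝓝 0) := by
      simpa using ((tendsto_iff_norm_sub_tendsto_zero.1 hy).mul_const C)
    refine squeeze_zero_norm (fun i => (norm_inner_le_norm _ _).trans ?_) hlim
    exact mul_le_mul_of_nonneg_left (hbdd i) (norm_nonneg _)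
  have hsq : Tendsto (fun i => ‖adjoint T (x i)‖ ^ 2) g (𝓝 0) := by
    have h := (hsub.add ((hx y).mono_left hg)).norm
    simp only [← inner_add_left, sub_add_cancel, add_zero, norm_zero] at h
    refine h.congr fun i => ?_
    rw [← adjoint_inner_right, inner_self_eq_norm_sq_to_K, norm_pow, RCLike.norm_ofReal, abs_norm]
  rw [tendsto_zero_iff_norm_tendsto_zero]
  simpa using hsq.sqrt

theorem tendsto_zero_of_tendsto_sub_of_tendsto_re_inner {ι : Type*} {l : Filter ι} {x y : ι → E}
    (hsub : Tendsto (fun i => x i - y i) l (𝓝 0))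
    (hinner : Tendsto (fun i => RCLike.re (inner 𝕜 (x i) (y i))) l (𝓝 0)) :
    Tendsto x l (𝓝 0) := by
  have hbound : Tendsto (fun i => ‖x i - y i‖ ^ 2 + 2 * RCLike.re (inner 𝕜 (x i) (y i))) l
      (𝓝 0) := by
    simpa using (hsub.norm.pow 2).add (hinner.const_mul 2)
  have hsq : Tendsto (fun i => ‖x i‖ ^ 2) l (𝓝 0) := by
    refine squeeze_zero (fun i => sq_nonneg _) (fun i => ?_) hbound
    rw [norm_sub_sq (𝕜 := 𝕜)]
    linarith [sq_nonneg ‖y i‖]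
  rw [tendsto_zero_iff_norm_tendsto_zero]
  simpa using hsq.sqrt

end InnerProduct

theorem eq_zero_of_forall_add_mul_pos {a b : ℝ} (h : ∀ t : ℝ, 0 < a + t * b) : b = 0 := by
  by_contra hb
  simpa [hb] using h (-a / b)

theorem clog_mul_of_re_pos {a b : ℂ} (ha : 0 < a.re) (hb : 0 < b.re) :
    Complex.log (a * b) = Complex.log a + Complex.log b := by
  obtain ⟨ha₁, ha₂⟩ := abs_lt.1 (Complex.abs_arg_lt_pi_div_two_iff.2 (Or.inl ha))
  obtain ⟨hb₁, hb₂⟩ := abs_lt.1 (Complex.abs_arg_lt_pi_div_two_iff.2 (Or.inl hb))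
  refine Complex.log_mul ?_ ?_ ⟨by linarith, by linarith⟩
  · rintro rfl; simp at ha
  · rintro rfl; simp at hb

theorem tendsto_add_ofReal_mul_div (a b : ℂ) :
    Tendsto (fun t : ℝ => (a + t * b) / t) atTop (𝓝 b) := by
  have hinv := tendsto_inv₀_cobounded.comp (RCLike.tendsto_ofReal_atTop_cobounded ℂ)
  have hlim := (hinv.const_mul a).add_const b
  rw [mul_zero, zero_add] at hlim
  refine hlim.congr' ?_
  filter_upwards [eventually_ne_atTop 0] with t ht
  change a * (t : ℂ)⁻¹ + b = _
  field_simp [Complex.ofReal_ne_zero.2 ht]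

theorem tendsto_add_ofReal_mul_add_sq_mul_div_sq (a b c : ℂ) :
    Tendsto (fun t : ℝ => (a + t * b + (t : ℂ) ^ 2 * c) / (t : ℂ) ^ 2) atTop (𝓝 c) := by
  have hinv := tendsto_inv₀_cobounded.comp (RCLike.tendsto_ofReal_atTop_cobounded ℂ)
  have hlim := ((tendsto_add_ofReal_mul_div a b).mul hinv).add_const c
  rw [mul_zero, zero_add] at hlim
  refine hlim.congr' ?_
  filter_upwards [eventually_ne_atTop 0] with t ht
  change (a + t * b) / t * (t : ℂ)⁻¹ + c = _
  field_simp [Complex.ofReal_ne_zero.2 ht]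

/-! ### Homogeneous coordinates -/

section Homogeneous

variable {E : Type*} [NormedAddCommGroup E] {p q : ℂ × E} {z ζ : E}

variable (E) in
/-- The homogeneous coordinates of the points of the open unit ball. -/
def positiveCone : Set (ℂ × E) := {p | ‖p.2‖ < ‖p.1‖}

theorem fst_ne_zero_of_mem_positiveCone (hp : p ∈ positiveCone E) : p.1 ≠ 0 :=
  norm_pos_iff.1 ((norm_nonneg p.2).trans_lt hp)

theorem norm_snd_le_of_mem_positiveCone (hp : p ∈ positiveCone E) : ‖p.2‖ ≤ ‖p.1‖ := le_of_lt hp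

theorem mk_one_mem_positiveCone (hz : z ∈ ball (0 : E) 1) : (1, z) ∈ positiveCone E := by
  simpa [positiveCone] using hz

variable [InnerProductSpace ℂ E]

/-- The indefinite Hermitian form `[p, q] = p̄₀ q₀ - ⟨q', p'⟩` on `ℂ × E`, whose null cone is the
cone over the unit sphere. A point `z` of `E` has homogeneous coordinates `(1, z)`. -/
def kreinForm : ℂ × E →ₗ⋆[ℂ] ℂ × E →ₗ[ℂ] ℂ :=
  LinearMap.mk₂'ₛₗ (starRingEnd ℂ) (RingHom.id ℂ)
    (fun p q => starRingEnd ℂ p.1 * q.1 - ⟪p.2, q.2⟫)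
    (fun p p' q => by simp only [Prod.fst_add, Prod.snd_add, map_add, inner_add_left]; ring)
    (fun c p q => by
      simp only [Prod.smul_fst, Prod.smul_snd, smul_eq_mul, map_mul, inner_smul_left]; ring)
    (fun p q q' => by simp only [Prod.fst_add, Prod.snd_add, inner_add_right]; ring)
    (fun c p q => by
      simp only [Prod.smul_fst, Prod.smul_snd, smul_eq_mul, inner_smul_right, RingHom.id_apply]
      ring)

/-- The point of `E` with homogeneous coordinates `p`, with junk value `0` at infinity. -/
def affinePoint (p : ℂ × E) : E := p.1⁻¹ • p.2

theorem kreinForm_apply (p q : ℂ × E) :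
    kreinForm p q = starRingEnd ℂ p.1 * q.1 - ⟪p.2, q.2⟫ := rfl

theorem conj_kreinForm (p q : ℂ × E) : starRingEnd ℂ (kreinForm p q) = kreinForm q p := by
  simp only [kreinForm_apply, map_sub, map_mul, Complex.conj_conj, inner_conj_symm, mul_comm]

theorem kreinForm_self (p : ℂ × E) : kreinForm p p = ((‖p.1‖ ^ 2 - ‖p.2‖ ^ 2 : ℝ) : ℂ) := by
  rw [kreinForm_apply, inner_self_eq_norm_sq_to_K, Complex.conj_mul']
  push_cast
  rfl

theorem mem_positiveCone_iff_re_kreinForm_pos :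
    p ∈ positiveCone E ↔ 0 < (kreinForm p p).re := by
  rw [kreinForm_self, Complex.ofReal_re, sub_pos, sq_lt_sq₀ (norm_nonneg _) (norm_nonneg _)]
  rfl

theorem norm_affinePoint_le_one (hp : ‖p.2‖ ≤ ‖p.1‖) : ‖affinePoint p‖ ≤ 1 := by
  rw [affinePoint, norm_smul, norm_inv]
  exact inv_mul_le_one_of_le₀ hp (norm_nonneg _)

theorem affinePoint_mem_ball_iff (hp : p.1 ≠ 0) :
    affinePoint p ∈ ball (0 : E) 1 ↔ p ∈ positiveCone E := by
  rw [mem_ball_zero_iff, affinePoint, norm_smul, norm_inv, inv_mul_lt_one₀ (norm_pos_iff.2 hp)]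
  rfl

theorem affinePoint_mem_ball (hp : p ∈ positiveCone E) : affinePoint p ∈ ball (0 : E) 1 :=
  (affinePoint_mem_ball_iff (fst_ne_zero_of_mem_positiveCone hp)).2 hp

theorem affinePoint_mk_one (z : E) : affinePoint (1, z) = z := by simp [affinePoint]

theorem smul_mk_one_affinePoint (hp : p.1 ≠ 0) : p.1 • ((1, affinePoint p) : ℂ × E) = p := by
  ext <;> simp [affinePoint, hp]

theorem affinePoint_smul {c : ℂ} (hc : c ≠ 0) (p : ℂ × E) :
    affinePoint (c • p) = affinePoint p := by
  simp only [affinePoint, Prod.smul_fst, Prod.smul_snd, smul_eq_mul, mul_inv, smul_smul]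
  rw [mul_right_comm, inv_mul_cancel₀ hc, one_mul]

theorem kreinForm_eq_mul_one_sub_inner (hp : p.1 ≠ 0) (hq : q.1 ≠ 0) :
    kreinForm p q = starRingEnd ℂ p.1 * q.1 * (1 - ⟪affinePoint p, affinePoint q⟫) := by
  have hp' : starRingEnd ℂ p.1 ≠ 0 := (map_ne_zero _).2 hp
  rw [kreinForm_apply, affinePoint, affinePoint, inner_smul_left, inner_smul_right, map_inv₀]
  field_simp

theorem kreinForm_ne_zero (hp : p ∈ positiveCone E) (hq : ‖q.2‖ ≤ ‖q.1‖) (hq0 : q.1 ≠ 0) :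
    kreinForm p q ≠ 0 := by
  refine sub_ne_zero.2 fun h => lt_irrefl (‖p.1‖ * ‖q.1‖) ?_
  calc ‖p.1‖ * ‖q.1‖ = ‖⟪p.2, q.2⟫‖ := by rw [← h, norm_mul, RCLike.norm_conj]
    _ ≤ ‖p.2‖ * ‖q.2‖ := norm_inner_le_norm _ _
    _ ≤ ‖p.2‖ * ‖q.1‖ := mul_le_mul_of_nonneg_left hq (norm_nonneg _)
    _ < ‖p.1‖ * ‖q.1‖ := mul_lt_mul_of_pos_right hp (norm_pos_iff.2 hq0)

theorem kreinForm_ne_zero_of_mem_positiveCone (hp : p ∈ positiveCone E)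
    (hq : q ∈ positiveCone E) : kreinForm p q ≠ 0 :=
  kreinForm_ne_zero hp (norm_snd_le_of_mem_positiveCone hq) (fst_ne_zero_of_mem_positiveCone hq)

theorem exists_kreinForm_eq_zero (hq : q.2 ≠ 0) :
    ∃ z, ‖z‖ = ‖q.1‖ / ‖q.2‖ ∧ kreinForm q (1, z) = 0 := by
  have hnorm : ‖q.2‖ ≠ 0 := norm_ne_zero_iff.2 hq
  refine ⟨(starRingEnd ℂ q.1 / (‖q.2‖ ^ 2 : ℝ)) • q.2, ?_, ?_⟩
  · rw [norm_smul, norm_div, RCLike.norm_conj, Complex.norm_real, norm_pow, norm_norm]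
    field_simp
  · have hnorm' : (‖q.2‖ : ℂ) ≠ 0 := Complex.ofReal_ne_zero.2 hnorm
    rw [kreinForm_apply, inner_smul_right, inner_self_eq_norm_sq_to_K]
    simp only [mul_one, Complex.ofReal_pow, Complex.coe_algebraMap]
    field_simp
    simp

theorem norm_snd_le_of_forall_kreinForm_ne_zero
    (h : ∀ z ∈ ball (0 : E) 1, kreinForm q (1, z) ≠ 0) : ‖q.2‖ ≤ ‖q.1‖ := by
  by_contra! hlt
  have hpos : 0 < ‖q.2‖ := (norm_nonneg _).trans_lt hlt
  obtain ⟨z, hz, hzero⟩ := exists_kreinForm_eq_zero (norm_pos_iff.1 hpos)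
  exact h z (by rwa [mem_ball_zero_iff, hz, div_lt_one hpos]) hzero

theorem mem_positiveCone_of_forall_kreinForm_ne_zero
    (h : ∀ z : E, ‖z‖ ≤ 1 → kreinForm q (1, z) ≠ 0) : q ∈ positiveCone E := by
  by_contra hle
  replace hle : ‖q.1‖ ≤ ‖q.2‖ := not_lt.1 hle
  rcases eq_or_ne q.2 0 with hq | hq
  · have hq1 : q.1 = 0 := norm_le_zero_iff.1 (by simpa [hq] using hle)
    exact h 0 (by simp) (by simp [kreinForm_apply, hq1])
  · obtain ⟨z, hz, hzero⟩ := exists_kreinForm_eq_zero hq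
    exact h z (hz.trans_le (div_le_one_of_le₀ hle (norm_nonneg _))) hzero

theorem eq_zero_of_forall_kreinForm_eq_zero
    (h : ∀ e : E, ‖e‖ ≤ 1 → kreinForm (1, e) q = 0) : q = 0 := by
  have hq1 : q.1 = 0 := by simpa [kreinForm_apply] using h 0 (by simp)
  refine Prod.ext hq1 (of_not_not fun hq2 => hq2 ?_)
  have hnorm : ‖((‖q.2‖⁻¹ : ℝ) : ℂ) • q.2‖ = 1 := by
    rw [norm_smul, Complex.norm_real, norm_inv, norm_norm, inv_mul_cancel₀ (norm_ne_zero_iff.2 hq2)]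
  simpa [kreinForm_apply, hq1, inner_smul_left, hq2] using h _ hnorm.le

theorem eq_smul_mk_one_of_kreinForm_eq_zero (hζ : ‖ζ‖ = 1) (hq : ‖q.2‖ ≤ ‖q.1‖)
    (h : kreinForm (1, ζ) q = 0) : q = q.1 • (1, ζ) := by
  have hinner : ⟪ζ, q.2⟫ = q.1 := by simpa [kreinForm_apply, sub_eq_zero, eq_comm] using h
  exact Prod.ext (by simp) (eq_smul_of_inner_eq hζ hq hinner)

/-- The parabolic one-parameter group of the form `kreinForm` attached to the isotropic vector
`(1, ζ)`. -/
def parabolic (ζ : E) (t : ℝ) (p : ℂ × E) : ℂ × E :=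
  p + (Complex.I * t * kreinForm (1, ζ) p) • (1, ζ)

theorem parabolic_zero (ζ : E) (p : ℂ × E) : parabolic ζ 0 p = p := by simp [parabolic]

theorem kreinForm_mk_one_self (hζ : ‖ζ‖ = 1) : kreinForm (1, ζ) (1, ζ) = 0 := by
  simp [kreinForm_self, hζ]

theorem kreinForm_parabolic (hζ : ‖ζ‖ = 1) (t : ℝ) (p q : ℂ × E) :
    kreinForm (parabolic ζ t p) (parabolic ζ t q) = kreinForm p q := by
  simp only [parabolic, map_add, map_smulₛₗ, LinearMap.add_apply, LinearMap.smul_apply,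
    smul_eq_mul, map_mul, Complex.conj_I, Complex.conj_ofReal, conj_kreinForm,
    kreinForm_mk_one_self hζ, RingHom.id_apply]
  ring

theorem parabolic_mem_positiveCone (hζ : ‖ζ‖ = 1) (t : ℝ) (hp : p ∈ positiveCone E) :
    parabolic ζ t p ∈ positiveCone E := by
  rw [mem_positiveCone_iff_re_kreinForm_pos] at hp ⊢
  rwa [kreinForm_parabolic hζ]

theorem kreinForm_mk_one_ne_zero (hζ : ‖ζ‖ = 1) (hp : p ∈ positiveCone E) :
    kreinForm (1, ζ) p ≠ 0 := by
  rw [← conj_kreinForm, map_ne_zero]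
  exact kreinForm_ne_zero hp (by simp [hζ]) one_ne_zero

theorem tendsto_affinePoint_parabolic (hζ : ‖ζ‖ = 1) (hp : p ∈ positiveCone E) :
    Tendsto (fun t => affinePoint (parabolic ζ t p)) atTop (𝓝 ζ) := by
  set c : ℂ := Complex.I * kreinForm (1, ζ) p with hc
  have hc0 : c ≠ 0 := mul_ne_zero Complex.I_ne_zero (kreinForm_mk_one_ne_zero hζ hp)
  have hinv : Tendsto (fun t : ℝ => ((t⁻¹ : ℝ) : ℂ)) atTop (𝓝 0) :=
    (Complex.continuous_ofReal.tendsto' _ _ Complex.ofReal_zero).comp tendsto_inv_atTop_zero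
  have hlim : Tendsto (fun t : ℝ => affinePoint (((t⁻¹ : ℝ) : ℂ) • p + c • (1, ζ))) atTop
      (𝓝 (affinePoint ((0 : ℂ) • p + c • (1, ζ)))) := by
    have h := (hinv.smul_const p).add_const (c • ((1, ζ) : ℂ × E))
    exact (h.fst_nhds.inv₀ (by simpa using hc0)).smul h.snd_nhds
  rw [zero_smul, zero_add, affinePoint_smul hc0, affinePoint_mk_one] at hlim
  refine hlim.congr' ?_
  filter_upwards [eventually_ne_atTop 0] with t ht
  have ht' : (t : ℂ) ≠ 0 := Complex.ofReal_ne_zero.2 ht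
  rw [← affinePoint_smul ht', smul_add, smul_smul, smul_smul, Complex.ofReal_inv,
    mul_inv_cancel₀ ht', one_smul, parabolic, hc]
  congr 3
  ring

end Homogeneous

/-! ### Linear fractional maps -/

namespace BallLFT

variable {N : ℕ}

/-- The linear map on homogeneous coordinates which induces a linear fractional map. -/
def homogenization (L : BallLFT N) :
    ℂ × EuclideanSpace ℂ (Fin N) →ₗ[ℂ] ℂ × EuclideanSpace ℂ (Fin N) :=
  LinearMap.prod
    ((innerₛₗ ℂ L.C).comp (LinearMap.snd ℂ _ _) + L.d • LinearMap.fst ℂ _ _)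
    ((Matrix.toEuclideanLin L.A).comp (LinearMap.snd ℂ _ _) +
      (LinearMap.fst ℂ _ _).smulRight L.B)

variable {L : BallLFT N} {p q : ℂ × EuclideanSpace ℂ (Fin N)} {e z ζ : EuclideanSpace ℂ (Fin N)}

theorem homogenization_apply (L : BallLFT N) (p : ℂ × EuclideanSpace ℂ (Fin N)) :
    L.homogenization p =
      (⟪L.C, p.2⟫ + L.d * p.1, Matrix.toEuclideanLin L.A p.2 + p.1 • L.B) := rfl

theorem homogenization_mk_one (L : BallLFT N) (z : EuclideanSpace ℂ (Fin N)) :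
    L.homogenization (1, z) = (⟪L.C, z⟫ + L.d, Matrix.toEuclideanLin L.A z + L.B) := by
  rw [homogenization_apply, mul_one, one_smul]

theorem affinePoint_homogenization_mk_one (L : BallLFT N) (z : EuclideanSpace ℂ (Fin N)) :
    affinePoint (L.homogenization (1, z)) = L.toFun z := by
  rw [homogenization_mk_one]
  rfl

theorem kreinForm_homogenization (L : BallLFT N) (p q : ℂ × EuclideanSpace ℂ (Fin N)) :
    kreinForm (L.homogenization p) q = kreinForm p (L.krein.homogenization q) := by
  simp only [kreinForm_apply, homogenization_apply, krein, map_add, map_mul, inner_add_left,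
    inner_add_right, inner_smul_left, inner_smul_right, inner_neg_left, inner_neg_right,
    inner_conj_symm, Matrix.toEuclideanLin_conjTranspose_eq_adjoint, LinearMap.adjoint_inner_right]
  ring

theorem affinePoint_homogenization (hp : p.1 ≠ 0) :
    affinePoint (L.homogenization p) = L.toFun (affinePoint p) := by
  nth_rw 1 [← smul_mk_one_affinePoint hp]
  rw [map_smul, affinePoint_smul hp, affinePoint_homogenization_mk_one]

theorem fst_homogenization (L : BallLFT N) (hp : p.1 ≠ 0) :
    (L.homogenization p).1 = p.1 * (⟪L.C, affinePoint p⟫ + L.d) := by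
  nth_rw 1 [← smul_mk_one_affinePoint hp]
  rw [map_smul, Prod.smul_fst, homogenization_mk_one, smul_eq_mul]

theorem IsSelfMap.homogenization_mem_positiveCone (h : L.IsSelfMap)
    (hp : p ∈ positiveCone _) : L.homogenization p ∈ positiveCone _ := by
  have hp1 := fst_ne_zero_of_mem_positiveCone hp
  have hz := affinePoint_mem_ball hp
  have hfst : (L.homogenization p).1 ≠ 0 := by
    rw [fst_homogenization L hp1]
    exact mul_ne_zero hp1 (h.1 _ hz)
  rw [← affinePoint_mem_ball_iff hfst, affinePoint_homogenization hp1]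
  exact h.2 hz

theorem IsSelfMap.norm_snd_homogenization_le (h : L.IsSelfMap) (hz : ‖z‖ ≤ 1) :
    ‖(L.homogenization (1, z)).2‖ ≤ ‖(L.homogenization (1, z)).1‖ := by
  have hclosed : IsClosed
      {w | ‖(L.homogenization (1, w)).2‖ ≤ ‖(L.homogenization (1, w)).1‖} := by
    have hcont : Continuous fun w => L.homogenization (1, w) :=
      L.homogenization.continuous_of_finiteDimensional.comp (by fun_prop)
    exact isClosed_le hcont.snd.norm hcont.fst.norm
  refine closure_minimal (s := Ball N) (fun w hw => ?_) hclosed ?_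
  · exact norm_snd_le_of_mem_positiveCone
      (h.homogenization_mem_positiveCone (mk_one_mem_positiveCone hw))
  · rwa [closure_ball _ one_ne_zero, mem_closedBall_zero_iff]

theorem IsSelfMap.norm_toFun_le_one (h : L.IsSelfMap) (hz : ‖z‖ ≤ 1) : ‖L.toFun z‖ ≤ 1 := by
  rw [← affinePoint_homogenization_mk_one]
  exact norm_affinePoint_le_one (h.norm_snd_homogenization_le hz)

theorem IsSelfMap.norm_snd_homogenization_krein_le (h : L.IsSelfMap) (he : ‖e‖ ≤ 1) :
    ‖(L.krein.homogenization (1, e)).2‖ ≤ ‖(L.krein.homogenization (1, e)).1‖ := by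
  refine norm_snd_le_of_forall_kreinForm_ne_zero fun z hz => ?_
  rw [← conj_kreinForm, ← kreinForm_homogenization, map_ne_zero]
  exact kreinForm_ne_zero (h.homogenization_mem_positiveCone (mk_one_mem_positiveCone hz))
    (by simpa using he) one_ne_zero

theorem IsSelfMap.homogenization_krein_mem_positiveCone (h : L.IsSelfMap)
    (hden : ∀ z : EuclideanSpace ℂ (Fin N), ‖z‖ ≤ 1 → (L.homogenization (1, z)).1 ≠ 0)
    (he : e ∈ Ball N) : L.krein.homogenization (1, e) ∈ positiveCone _ := by
  refine mem_positiveCone_of_forall_kreinForm_ne_zero fun z hz => ?_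
  rw [← conj_kreinForm, ← kreinForm_homogenization, conj_kreinForm]
  exact kreinForm_ne_zero (mk_one_mem_positiveCone he) (h.norm_snd_homogenization_le hz) (hden z hz)

/-- A form of the Julia lemma for linear fractional maps. -/
theorem IsSelfMap.homogenization_krein_eq_smul (h : L.IsSelfMap) (he : ‖e‖ ≤ 1) (hζ : ‖ζ‖ = 1)
    (hζe : kreinForm (1, e) (L.homogenization (1, ζ)) = 0) :
    L.krein.homogenization (1, e) = (L.krein.homogenization (1, e)).1 • (1, ζ) := by
  refine eq_smul_mk_one_of_kreinForm_eq_zero hζ (h.norm_snd_homogenization_krein_le he) ?_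
  rw [← kreinForm_homogenization, ← conj_kreinForm, hζe, map_zero]

theorem IsSelfMap.homogenization_eq_smul_of_homogenization_eq_zero (h : L.IsSelfMap)
    (hζ : ‖ζ‖ = 1) (hzero : L.homogenization (1, ζ) = 0) (p : ℂ × EuclideanSpace ℂ (Fin N)) :
    L.homogenization p = kreinForm (1, ζ) p • L.homogenization (1, 0) := by
  rw [← sub_eq_zero]
  refine eq_zero_of_forall_kreinForm_eq_zero fun e he => ?_
  have hjulia := h.homogenization_krein_eq_smul he hζ (by rw [hzero, map_zero])
  have hform (r) : kreinForm (1, e) (L.homogenization r) =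
      starRingEnd ℂ (L.krein.homogenization (1, e)).1 * kreinForm (1, ζ) r := by
    rw [← conj_kreinForm, kreinForm_homogenization, hjulia, conj_kreinForm, LinearMap.map_smulₛₗ₂]
    simp
  rw [map_sub, map_smul, hform, hform, kreinForm_apply _ (1, 0)]
  simp [mul_comm]

theorem IsSelfMap.forall_fst_homogenization_ne_zero_or_const (h : L.IsSelfMap) :
    (∀ z : EuclideanSpace ℂ (Fin N), ‖z‖ ≤ 1 → (L.homogenization (1, z)).1 ≠ 0) ∨
      ∀ z ∈ Ball N, L.toFun z = L.toFun 0 := by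
  refine or_iff_not_imp_left.2 fun hden z hz => ?_
  push Not at hden
  obtain ⟨ζ, hζ, hfst⟩ := hden
  have hζ1 : ‖ζ‖ = 1 := by
    refine hζ.antisymm (not_lt.1 fun hlt => fst_ne_zero_of_mem_positiveCone ?_ hfst)
    exact h.homogenization_mem_positiveCone
      (mk_one_mem_positiveCone (mem_ball_zero_iff.2 hlt))
  have hsnd : (L.homogenization (1, ζ)).2 = 0 := by
    simpa [hfst] using h.norm_snd_homogenization_le hζ
  rw [← affinePoint_homogenization_mk_one,
    h.homogenization_eq_smul_of_homogenization_eq_zero hζ1 (Prod.ext hfst hsnd),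
    affinePoint_smul (kreinForm_mk_one_ne_zero hζ1 (mk_one_mem_positiveCone hz)),
    affinePoint_homogenization_mk_one]

/-- The linear fractional map `c φ`. -/
def scale (c : ℂ) (L : BallLFT N) : BallLFT N := ⟨c • L.A, c • L.B, L.C, L.d⟩

theorem toFun_scale (c : ℂ) (L : BallLFT N) (z : EuclideanSpace ℂ (Fin N)) :
    (L.scale c).toFun z = c • L.toFun z := by
  simp only [← affinePoint_homogenization_mk_one, homogenization_mk_one, affinePoint, scale,
    map_smul, LinearMap.smul_apply, ← smul_add]
  exact smul_comm _ _ _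

theorem continuousOn_toFun
    (hden : ∀ z : EuclideanSpace ℂ (Fin N), ‖z‖ ≤ 1 → (L.homogenization (1, z)).1 ≠ 0) :
    ContinuousOn L.toFun (closedBall 0 1) := by
  have hcont : Continuous fun z => L.homogenization (1, z) :=
    L.homogenization.continuous_of_finiteDimensional.comp (by fun_prop)
  refine ContinuousOn.congr ?_ fun z _ => (affinePoint_homogenization_mk_one L z).symm
  exact (hcont.fst.continuousOn.inv₀ fun z hz => hden z (mem_closedBall_zero_iff.1 hz)).smul
    hcont.snd.continuousOn

theorem kreinForm_homogenization_parabolic (L₁ L₂ : BallLFT N) (ζ : EuclideanSpace ℂ (Fin N))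
    (t : ℝ) (p q : ℂ × EuclideanSpace ℂ (Fin N)) :
    kreinForm (L₁.homogenization (parabolic ζ t p)) (L₂.homogenization (parabolic ζ t q)) =
      kreinForm (L₁.homogenization p) (L₂.homogenization q) +
      t * (Complex.I *
        (kreinForm (1, ζ) q * kreinForm (L₁.homogenization p) (L₂.homogenization (1, ζ)) -
          kreinForm p (1, ζ) * kreinForm (L₁.homogenization (1, ζ)) (L₂.homogenization q))) +
      t ^ 2 * (kreinForm p (1, ζ) * kreinForm (1, ζ) q *
        kreinForm (L₁.homogenization (1, ζ)) (L₂.homogenization (1, ζ))) := by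
  simp only [parabolic, map_add, map_smul, map_smulₛₗ, LinearMap.add_apply, LinearMap.smul_apply,
    smul_eq_mul, map_mul, Complex.conj_I, Complex.conj_ofReal, conj_kreinForm]
  linear_combination (-(t : ℂ) ^ 2 * (kreinForm p (1, ζ) * kreinForm (1, ζ) q *
    kreinForm (L₁.homogenization (1, ζ)) (L₂.homogenization (1, ζ)))) * Complex.I_mul_I

/-- `L` maps the point `ζ` to `η` (unless `d = 0`), and its Krein adjoint maps `η` back to `ζ`
(unless `k = 0`), with the given multipliers on homogeneous coordinates. -/
structure IsContact (L : BallLFT N) (ζ η : EuclideanSpace ℂ (Fin N)) (d k : ℂ) : Prop where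
  homogenization_eq : L.homogenization (1, ζ) = d • (1, η)
  homogenization_krein_eq : L.krein.homogenization (1, η) = k • (1, ζ)

variable {L₁ L₂ : BallLFT N} {η : EuclideanSpace ℂ (Fin N)} {d d₁ d₂ k k₁ k₂ : ℂ}

theorem IsSelfMap.exists_isContact (h : L.IsSelfMap) (hζ : ‖ζ‖ = 1) (hη : ‖η‖ = 1)
    (hζη : kreinForm (1, η) (L.homogenization (1, ζ)) = 0) : ∃ d k, L.IsContact ζ η d k :=
  ⟨_, _, eq_smul_mk_one_of_kreinForm_eq_zero hη (h.norm_snd_homogenization_le hζ.le) hζη,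
    h.homogenization_krein_eq_smul hη.le hζ hζη⟩

theorem kreinForm_homogenization_parabolic_of_isContact (hη : ‖η‖ = 1)
    (h₁ : L₁.IsContact ζ η d₁ k₁) (h₂ : L₂.IsContact ζ η d₂ k₂)
    (t : ℝ) (p q : ℂ × EuclideanSpace ℂ (Fin N)) :
    kreinForm (L₁.homogenization (parabolic ζ t p)) (L₂.homogenization (parabolic ζ t q)) =
      kreinForm (L₁.homogenization p) (L₂.homogenization q) +
      t * (kreinForm p (1, ζ) * kreinForm (1, ζ) q *
        (Complex.I * (k₁ * d₂ - starRingEnd ℂ (k₂ * d₁)))) := by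
  have hleft : kreinForm (L₁.homogenization p) (1, η) = k₁ * kreinForm p (1, ζ) := by
    rw [kreinForm_homogenization, h₁.homogenization_krein_eq, map_smul, smul_eq_mul]
  have hright : kreinForm (1, η) (L₂.homogenization q) = starRingEnd ℂ k₂ * kreinForm (1, ζ) q := by
    rw [← conj_kreinForm, kreinForm_homogenization, h₂.homogenization_krein_eq, map_smul,
      smul_eq_mul, map_mul, conj_kreinForm]
  rw [kreinForm_homogenization_parabolic, h₁.homogenization_eq, h₂.homogenization_eq]
  simp only [map_smul, map_smulₛₗ, LinearMap.smul_apply, smul_eq_mul, kreinForm_mk_one_self hη,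
    hleft, hright, map_mul]
  ring

theorem IsSelfMap.conj_mul_of_isContact (h : L.IsSelfMap) (hζ : ‖ζ‖ = 1) (hη : ‖η‖ = 1)
    (hL : L.IsContact ζ η d k) : starRingEnd ℂ (k * d) = k * d := by
  have horigin : (1, 0) ∈ positiveCone (EuclideanSpace ℂ (Fin N)) := by simp [positiveCone]
  have hre : (Complex.I * (k * d - starRingEnd ℂ (k * d))).re = 0 := by
    refine eq_zero_of_forall_add_mul_pos
      (a := (kreinForm (L.homogenization (1, 0)) (L.homogenization (1, 0))).re) fun t => ?_
    have hpos := mem_positiveCone_iff_re_kreinForm_pos.1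
      (h.homogenization_mem_positiveCone (parabolic_mem_positiveCone hζ t horigin))
    rw [kreinForm_homogenization_parabolic_of_isContact hη hL hL] at hpos
    simpa [kreinForm_apply] using hpos
  rw [Complex.sub_conj] at hre
  exact Complex.conj_eq_iff_im.2 (by simpa using hre)

theorem IsSelfMap.kreinForm_homogenization_parabolic_self (h : L.IsSelfMap) (hζ : ‖ζ‖ = 1)
    (hη : ‖η‖ = 1) (hL : L.IsContact ζ η d k) (t : ℝ)
    (p q : ℂ × EuclideanSpace ℂ (Fin N)) :
    kreinForm (L.homogenization (parabolic ζ t p)) (L.homogenization (parabolic ζ t q)) =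
      kreinForm (L.homogenization p) (L.homogenization q) := by
  rw [kreinForm_homogenization_parabolic_of_isContact hη hL hL,
    h.conj_mul_of_isContact hζ hη hL, sub_self, mul_zero, mul_zero, mul_zero, add_zero]

end BallLFT

/-! ### Operators prescribed on a total family -/

section TotalFamily

variable {𝕜 ι E : Type*} [RCLike 𝕜] [NormedAddCommGroup E] [InnerProductSpace 𝕜 E]
  {k : ι → E}

theorem denseRange_linearCombination {𝕜 ι E : Type*} [RCLike 𝕜] [NormedAddCommGroup E]
    [NormedSpace 𝕜 E] {k : ι → E} (hk : Dense (Submodule.span 𝕜 (range k) : Set E)) :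
    DenseRange (Finsupp.linearCombination 𝕜 k) := by
  rwa [DenseRange, ← LinearMap.coe_range, Finsupp.range_linearCombination]

theorem exists_clm_of_norm_linearCombination_le {𝕜 ι E F : Type*} [RCLike 𝕜]
    [NormedAddCommGroup E] [NormedSpace 𝕜 E] [NormedAddCommGroup F] [NormedSpace 𝕜 F]
    [CompleteSpace F] {k : ι → E} {v : ι → F} {C : ℝ}
    (hk : Dense (Submodule.span 𝕜 (range k) : Set E)) (hC : 0 ≤ C)
    (h : ∀ x, ‖Finsupp.linearCombination 𝕜 v x‖ ≤ C * ‖Finsupp.linearCombination 𝕜 k x‖) :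
    ∃ T : E →L[𝕜] F, ‖T‖ ≤ C ∧ ∀ i, T (k i) = v i := by
  have hdense := denseRange_linearCombination hk
  refine ⟨_, LinearMap.opNorm_extendOfNorm_le hdense hC h, fun i => ?_⟩
  simpa only [Finsupp.linearCombination_single, one_smul] using
    LinearMap.extendOfNorm_eq hdense ⟨C, h⟩ (Finsupp.single i 1)

theorem norm_linearCombination_le_of_hasSum_inner {G : ℕ → Type*}
    [∀ m, NormedAddCommGroup (G m)] [∀ m, InnerProductSpace 𝕜 (G m)] {u : ∀ m, ι → G m}
    (h : ∀ i j, HasSum (fun m => inner 𝕜 (u m i) (u m j)) (inner 𝕜 (k i) (k j))) (m : ℕ)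
    (x : ι →₀ 𝕜) :
    ‖Finsupp.linearCombination 𝕜 (u m) x‖ ≤ ‖Finsupp.linearCombination 𝕜 k x‖ := by
  have hsum : HasSum (fun m => inner 𝕜 (Finsupp.linearCombination 𝕜 (u m) x)
      (Finsupp.linearCombination 𝕜 (u m) x))
      (inner 𝕜 (Finsupp.linearCombination 𝕜 k x) (Finsupp.linearCombination 𝕜 k x)) := by
    simp only [Finsupp.linearCombination_apply, Finsupp.sum_inner, Finsupp.inner_sum,
      inner_smul_left, inner_smul_right]
    exact hasSum_sum fun i _ => (hasSum_sum fun j _ => (h j i).mul_left _).mul_left _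
  have hsum' := RCLike.hasSum_re 𝕜 hsum
  simp only [inner_self_eq_norm_sq] at hsum'
  exact le_of_sq_le_sq (le_hasSum hsum' m fun _ _ => sq_nonneg _) (norm_nonneg _)

theorem isCompactOperator_tsum {𝕜 E F : Type*} [NontriviallyNormedField 𝕜]
    [SeminormedAddCommGroup E] [NormedSpace 𝕜 E] [NormedAddCommGroup F] [NormedSpace 𝕜 F]
    [CompleteSpace F] {T : ℕ → E →L[𝕜] F} (hsum : Summable T)
    (hT : ∀ m, IsCompactOperator (T m)) : IsCompactOperator ⇑(∑' m, T m) :=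
  isCompactOperator_of_tendsto hsum.hasSum.tendsto_sum_nat <| .of_forall fun _ =>
    (compactOperator (RingHom.id 𝕜) E F).sum_mem fun m _ => hT m

theorem exists_isCompactOperator_hasSum_inner [CompleteSpace E] {G : ℕ → Type*}
    [∀ m, NormedAddCommGroup (G m)] [∀ m, InnerProductSpace 𝕜 (G m)]
    [∀ m, FiniteDimensional 𝕜 (G m)] {u : ∀ m, ι → G m} {c : ℕ → 𝕜}
    (hk : Dense (Submodule.span 𝕜 (range k) : Set E))
    (h : ∀ i j, HasSum (fun m => inner 𝕜 (u m i) (u m j)) (inner 𝕜 (k i) (k j)))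
    (hc : Summable fun m => ‖c m‖) :
    ∃ D : E →L[𝕜] E, IsCompactOperator D ∧
      ∀ i j, HasSum (fun m => c m * inner 𝕜 (u m i) (u m j)) (inner 𝕜 (k i) (D (k j))) := by
  have (m : ℕ) : CompleteSpace (G m) := FiniteDimensional.complete 𝕜 _
  choose V hV hVk using fun m => exists_clm_of_norm_linearCombination_le hk zero_le_one fun x =>
    (norm_linearCombination_le_of_hasSum_inner h m x).trans_eq (one_mul _).symm
  let T (m : ℕ) : E →L[𝕜] E := c m • (ContinuousLinearMap.adjoint (V m) ∘L V m)
  have hT : Summable T := hc.of_norm_bounded fun m => by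
    rw [norm_smul, ContinuousLinearMap.norm_adjoint_comp_self]
    exact mul_le_of_le_one_right (norm_nonneg _) (mul_le_one₀ (hV m) (norm_nonneg _) (hV m))
  refine ⟨∑' m, T m, isCompactOperator_tsum hT fun m => ?_, fun i j => ?_⟩
  · have := FiniteDimensional.proper 𝕜 (G m)
    have hVm : IsCompactOperator (V m) := isCompactOperator_of_locallyCompactSpace_dom _
    exact (hVm.clm_comp (ContinuousLinearMap.adjoint (V m))).smul (c m)
  · have hinner := (hT.hasSum.mapL (ContinuousLinearMap.apply 𝕜 E (k j))).mapL (innerSL 𝕜 (k i))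
    simpa only [T, ContinuousLinearMap.apply_apply, smul_apply,
      ContinuousLinearMap.comp_apply, innerSL_apply_apply, inner_smul_right,
      ContinuousLinearMap.adjoint_inner_right, hVk] using hinner

variable {η σ : ι → ι} {o : ι}

theorem bddAbove_norm_linearCombination_iterate {M : ℝ} {τ : ι → ι}
    (hM : ∀ i, ‖k (τ i)‖ ≤ M) (x : ι →₀ 𝕜) :
    BddAbove (range fun n => ‖Finsupp.linearCombination 𝕜 k
      (((Finsupp.linearCombination 𝕜 fun i =>
        Finsupp.single (τ i) (1 : 𝕜) - Finsupp.single (τ o) 1) ^ n) x)‖) := by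
  set A := Finsupp.linearCombination 𝕜 fun i =>
    Finsupp.single (τ i) (1 : 𝕜) - Finsupp.single (τ o) 1
  induction x using Finsupp.induction_linear with
  | zero => simp only [map_zero, norm_zero, range_const, bddAbove_singleton]
  | add f g hf hg =>
    obtain ⟨C, hC⟩ := hf
    obtain ⟨D, hD⟩ := hg
    refine ⟨C + D, forall_mem_range.2 fun n => ?_⟩
    rw [map_add, map_add]
    exact (norm_add_le _ _).trans (add_le_add (hC ⟨n, rfl⟩) (hD ⟨n, rfl⟩))
  | single a c =>
    have hiter (n : ℕ) : (A ^ (n + 1)) (Finsupp.single a c) =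
        c • (Finsupp.single (τ^[n + 1] a) (1 : 𝕜) - Finsupp.single (τ^[n + 1] o) 1) := by
      induction n with
      | zero => simp [A]
      | succ n ih =>
        rw [pow_succ', Module.End.mul_apply, ih, Function.iterate_succ_apply' _ (n + 1),
          Function.iterate_succ_apply' _ (n + 1)]
        simp [A]
    refine ⟨max ‖Finsupp.linearCombination 𝕜 k (Finsupp.single a c)‖ (‖c‖ * (M + M)),
      forall_mem_range.2 fun n => ?_⟩
    cases n with
    | zero => exact le_max_left _ _
    | succ n =>
      simp only [hiter, map_smul, map_sub, Finsupp.linearCombination_single, one_smul, norm_smul,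
        Function.iterate_succ_apply']
      refine le_max_of_le_right (mul_le_mul_of_nonneg_left ?_ (norm_nonneg c))
      exact (norm_sub_le _ _).trans (add_le_add (hM _) (hM _))

/- Lax's symmetrization: `A : k v ↦ k (η (σ v)) - k (η (σ o))` is symmetric and
`X : k v ↦ k (σ v) - k (σ o)` satisfies `X† X = A`. -/
theorem norm_linearCombination_sub_le {M : ℝ}
    (hησ : ∀ u v, inner 𝕜 (k (η u) - k (η o)) (k v) = inner 𝕜 (k u) (k (σ v) - k (σ o)))
    (hM : ∀ u, ‖k (η u)‖ ≤ M) (x : ι →₀ 𝕜) :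
    ‖Finsupp.linearCombination 𝕜 (fun v => k (σ v) - k (σ o)) x‖ ≤
      ‖Finsupp.linearCombination 𝕜 k x‖ := by
  set K := Finsupp.linearCombination 𝕜 k
  set X := Finsupp.linearCombination 𝕜 fun v => k (σ v) - k (σ o)
  set A := Finsupp.linearCombination 𝕜 fun v =>
    Finsupp.single (η (σ v)) (1 : 𝕜) - Finsupp.single (η (σ o)) 1
  have hKA (x : ι →₀ 𝕜) :
      K (A x) = Finsupp.linearCombination 𝕜 (fun v => k (η (σ v)) - k (η (σ o))) x := by
    simp only [K, A, Finsupp.linearCombination_apply, map_finsuppSum, map_smul, map_sub,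
      Finsupp.sum_single_index, zero_smul, one_smul]
  have hXA (x y : ι →₀ 𝕜) : inner 𝕜 (X x) (X y) = inner 𝕜 (K (A x)) (K y) := by
    rw [hKA]
    refine inner_linearCombination_congr (fun i j => ?_) x y
    rw [inner_sub_left, ← hησ, ← hησ, ← inner_sub_left, sub_sub_sub_cancel_right]
  have hsymm (x y : ι →₀ 𝕜) : inner 𝕜 (K (A x)) (K y) = inner 𝕜 (K x) (K (A y)) := by
    rw [← hXA, ← inner_conj_symm, hXA, inner_conj_symm]
  have hA := norm_le_of_symmetric_of_bddAbove_iterates hsymm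
    (bddAbove_norm_linearCombination_iterate fun v => hM (σ v)) x
  refine le_of_sq_le_sq ?_ (norm_nonneg _)
  calc ‖X x‖ ^ 2 ≤ ‖K (A x)‖ * ‖K x‖ := norm_sq_le_of_inner_self_eq (hXA x x)
    _ ≤ ‖K x‖ ^ 2 := by rw [sq]; exact mul_le_mul_of_nonneg_right hA (norm_nonneg _)

end TotalFamily

/-! ### The reproducing kernels -/

section InnerBall

variable {E : Type*} [NormedAddCommGroup E] [InnerProductSpace ℂ E] {z w : E}

theorem norm_inner_lt_one (hz : ‖z‖ ≤ 1) (hw : w ∈ ball (0 : E) 1) : ‖⟪z, w⟫‖ < 1 := calc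
  ‖⟪z, w⟫‖ ≤ ‖z‖ * ‖w‖ := norm_inner_le_norm _ _
  _ ≤ ‖w‖ := mul_le_of_le_one_left (norm_nonneg _) hz
  _ < 1 := mem_ball_zero_iff.1 hw

theorem re_one_sub_inner_pos (hz : ‖z‖ ≤ 1) (hw : w ∈ ball (0 : E) 1) : 0 < (1 - ⟪z, w⟫).re := by
  rw [Complex.sub_re, Complex.one_re, sub_pos]
  exact (Complex.re_le_norm _).trans_lt (norm_inner_lt_one hz hw)

end InnerBall

namespace DirichletSpace

variable {N : ℕ} (S : DirichletSpace N) {w z : EuclideanSpace ℂ (Fin N)}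
  {φ ψ : EuclideanSpace ℂ (Fin N) → EuclideanSpace ℂ (Fin N)}

theorem inner_kernel (hw : w ∈ Ball N) (hz : z ∈ Ball N) :
    ⟪S.kernel w, S.kernel z⟫ = 1 - Complex.log (1 - ⟪z, w⟫) := by
  have harg : (1 - ⟪z, w⟫).arg ≠ Real.pi := fun h =>
    (Complex.arg_eq_pi_iff.1 h).1.not_gt (re_one_sub_inner_pos (mem_ball_zero_iff.1 hz).le hw)
  rw [S.reproducing _ w hw, S.eval_kernel z hz w hw, Complex.log_inv _ harg, ← sub_eq_add_neg]

theorem inner_kernel_kernel_zero (hw : w ∈ Ball N) : ⟪S.kernel w, S.kernel 0⟫ = 1 := by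
  rw [S.inner_kernel hw (mem_ball_self one_pos), inner_zero_left, sub_zero, Complex.log_one,
    sub_zero]

theorem re_inner_kernel (hw : w ∈ Ball N) (hz : z ∈ Ball N) :
    (⟪S.kernel w, S.kernel z⟫).re = 1 - Real.log ‖1 - ⟪z, w⟫‖ := by
  rw [S.inner_kernel hw hz, Complex.sub_re, Complex.one_re, Complex.log_re]

theorem norm_kernel_sq (hw : w ∈ Ball N) : ‖S.kernel w‖ ^ 2 = 1 - Real.log (1 - ‖w‖ ^ 2) := by
  have hw1 : 0 ≤ 1 - ‖w‖ ^ 2 := by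
    nlinarith [norm_nonneg w, mem_ball_zero_iff.1 hw]
  have hnorm : ‖1 - ⟪w, w⟫‖ = 1 - ‖w‖ ^ 2 := by
    rw [inner_self_eq_norm_sq_to_K, ← Complex.norm_of_nonneg hw1, Complex.ofReal_sub,
      Complex.ofReal_one, Complex.ofReal_pow]
    rfl
  rw [← inner_self_eq_norm_sq (𝕜 := ℂ), ← hnorm]
  exact S.re_inner_kernel hw hw

theorem norm_kernel_le {r : ℝ} (hr : r < 1) (hw : ‖w‖ ≤ r) :
    ‖S.kernel w‖ ≤ √(1 - Real.log (1 - r ^ 2)) := by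
  have hw0 := norm_nonneg w
  refine Real.le_sqrt_of_sq_le ?_
  rw [S.norm_kernel_sq (mem_ball_zero_iff.2 (hw.trans_lt hr))]
  have hlog : Real.log (1 - r ^ 2) ≤ Real.log (1 - ‖w‖ ^ 2) :=
    Real.log_le_log (by nlinarith) (by nlinarith)
  linarith

theorem dense_span_kernel :
    Dense (Submodule.span ℂ (range fun w : Ball N => S.kernel w) : Set S.H) := by
  rw [Submodule.dense_iff_topologicalClosure_eq_top, Submodule.topologicalClosure_eq_top_iff,
    Submodule.eq_bot_iff]
  refine fun f hf => S.eval_injective f 0 fun z hz => ?_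
  rw [← S.reproducing f z hz, ← S.reproducing 0 z hz, inner_zero_right]
  exact hf _ (Submodule.subset_span ⟨⟨z, hz⟩, rfl⟩)

theorem clm_ext_kernel {F : Type*} [NormedAddCommGroup F] [NormedSpace ℂ F] {T U : S.H →L[ℂ] F}
    (h : ∀ w ∈ Ball N, T (S.kernel w) = U (S.kernel w)) : T = U :=
  ContinuousLinearMap.ext_on S.dense_span_kernel <| by
    rintro _ ⟨w, rfl⟩
    exact h w w.2

variable {S} {T U : S.H →L[ℂ] S.H}

theorem isCompositionOperator_of_inner_kernel (hφ : MapsTo φ (Ball N) (Ball N))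
    (h : ∀ w ∈ Ball N, ∀ z ∈ Ball N,
      ⟪S.kernel w, T (S.kernel z)⟫ = ⟪S.kernel (φ w), S.kernel z⟫) :
    S.IsCompositionOperator φ T := fun f w hw => by
  have hfun : (innerSL ℂ (S.kernel w)).comp T = innerSL ℂ (S.kernel (φ w)) :=
    S.clm_ext_kernel (h w hw)
  rw [← S.reproducing _ w hw, ← S.reproducing _ _ (hφ hw)]
  exact DFunLike.congr_fun hfun f

theorem IsCompositionOperator.adjoint_kernel (hφ : MapsTo φ (Ball N) (Ball N))
    (hT : S.IsCompositionOperator φ T) (hw : w ∈ Ball N) :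
    ContinuousLinearMap.adjoint T (S.kernel w) = S.kernel (φ w) := by
  refine ext_inner_right ℂ fun f => ?_
  rw [ContinuousLinearMap.adjoint_inner_left, S.reproducing _ w hw, hT f w hw,
    S.reproducing f _ (hφ hw)]

theorem IsCompositionOperator.eq (hT : S.IsCompositionOperator φ T)
    (hU : S.IsCompositionOperator ψ U) (h : EqOn φ ψ (Ball N)) : T = U :=
  ContinuousLinearMap.ext fun f => S.eval_injective _ _ fun z hz => by
    rw [hT f z hz, hU f z hz, h hz]

theorem IsCompositionOperator.comp (hT : S.IsCompositionOperator φ T)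
    (hU : S.IsCompositionOperator ψ U) (hψ : MapsTo ψ (Ball N) (Ball N)) :
    S.IsCompositionOperator (φ ∘ ψ) (U ∘L T) := fun f z hz => by
  rw [ContinuousLinearMap.comp_apply, hU _ z hz, hT f _ (hψ hz), Function.comp_apply]

variable (S) in
theorem isCompositionOperator_const {a : EuclideanSpace ℂ (Fin N)} (ha : a ∈ Ball N) :
    S.IsCompositionOperator (fun _ => a) ((innerSL ℂ (S.kernel a)).smulRight (S.kernel 0)) :=
  isCompositionOperator_of_inner_kernel (fun _ _ => ha) fun w hw z _ => by
    rw [ContinuousLinearMap.smulRight_apply, inner_smul_right, S.inner_kernel_kernel_zero hw,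
      mul_one, innerSL_apply_apply]

/-! ### Dilations -/

/-- The coefficient of `x ^ m` in `1 - log (1 - x)`. -/
def kernelCoeff (m : ℕ) : ℝ := if m = 0 then 1 else (m : ℝ)⁻¹

theorem kernelCoeff_nonneg (m : ℕ) : 0 ≤ kernelCoeff m := by
  unfold kernelCoeff
  split_ifs <;> positivity

theorem hasSum_kernelCoeff_mul_pow {x : ℂ} (hx : ‖x‖ < 1) :
    HasSum (fun m : ℕ => (kernelCoeff m : ℂ) * x ^ m) (1 - Complex.log (1 - x)) := by
  rw [sub_eq_add_neg 1 (Complex.log _)]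
  refine ((hasSum_ite_eq (0 : ℕ) (1 : ℂ)).add (Complex.hasSum_taylorSeries_neg_log hx)).congr_fun
    fun m => ?_
  unfold kernelCoeff
  split_ifs with hm
  · simp [hm]
  · push_cast
    rw [zero_add, div_eq_inv_mul]

/-- The conjugate `m`-fold tensor power of `w`, in coordinates, scaled so that the inner products
are the homogeneous parts of degree `m` of the kernel. -/
def tensorPower (m : ℕ) (w : EuclideanSpace ℂ (Fin N)) : EuclideanSpace ℂ (Fin m → Fin N) :=
  (√(kernelCoeff m) : ℂ) • WithLp.toLp 2 fun i => ∏ j, starRingEnd ℂ (w (i j))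

theorem inner_tensorPower (m : ℕ) (w z : EuclideanSpace ℂ (Fin N)) :
    ⟪tensorPower m w, tensorPower m z⟫ = kernelCoeff m * ⟪z, w⟫ ^ m := by
  rw [tensorPower, tensorPower, inner_smul_left, inner_smul_right, Complex.conj_ofReal,
    ← mul_assoc, ← Complex.ofReal_mul, Real.mul_self_sqrt (kernelCoeff_nonneg m),
    PiLp.inner_apply, PiLp.inner_apply, Finset.sum_pow', Fintype.piFinset_univ]
  refine congrArg _ (Finset.sum_congr rfl fun i _ => ?_)
  simp only [RCLike.inner_apply, map_prod, Complex.conj_conj, ← Finset.prod_mul_distrib, mul_comm]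

variable (S) in
theorem exists_isCompactOperator_isCompositionOperator_smul {c : ℂ} (hc : ‖c‖ < 1) :
    ∃ D : S.H →L[ℂ] S.H, IsCompactOperator D ∧ S.IsCompositionOperator (c • ·) D := by
  obtain ⟨D, hcomp, hD⟩ := exists_isCompactOperator_hasSum_inner (c := (c ^ ·))
    S.dense_span_kernel (u := fun m (w : Ball N) => tensorPower m w.1)
    (fun w z => by
      simp only [inner_tensorPower, S.inner_kernel w.2 z.2]
      exact hasSum_kernelCoeff_mul_pow (norm_inner_lt_one (mem_ball_zero_iff.1 z.2).le w.2))
    (by simpa only [norm_pow] using summable_geometric_of_lt_one (norm_nonneg c) hc)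
  refine ⟨D, hcomp, isCompositionOperator_of_inner_kernel
    (fun _ hw => balanced_ball_zero.smul_mem hc.le hw)
    fun w hw z hz => (hD ⟨w, hw⟩ ⟨z, hz⟩).unique ?_⟩
  have hcw : c • w ∈ Ball N := balanced_ball_zero.smul_mem hc.le hw
  rw [S.inner_kernel hcw hz]
  refine (hasSum_kernelCoeff_mul_pow
    (norm_inner_lt_one (mem_ball_zero_iff.1 hz).le hcw)).congr_fun fun m => ?_
  rw [inner_tensorPower, inner_smul_right, mul_pow, mul_left_comm]

end DirichletSpace

/-! ### Compactness for symbols of norm less than one -/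

section SupNorm

variable {N : ℕ} {φ : EuclideanSpace ℂ (Fin N) → EuclideanSpace ℂ (Fin N)}

theorem norm_le_supNorm (hφ : MapsTo φ (Ball N) (Ball N)) {z : EuclideanSpace ℂ (Fin N)}
    (hz : z ∈ Ball N) : ‖φ z‖ ≤ supNorm φ :=
  le_csSup ⟨1, forall_mem_image.2 fun _ hw => (mem_ball_zero_iff.1 (hφ hw)).le⟩
    (mem_image_of_mem _ hz)

theorem supNorm_le {r : ℝ} (h : ∀ z ∈ Ball N, ‖φ z‖ ≤ r) : supNorm φ ≤ r :=
  csSup_le ((nonempty_ball.2 one_pos).image _) (forall_mem_image.2 h)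

end SupNorm

namespace BallLFT

variable {N : ℕ} {L : BallLFT N} (S : DirichletSpace N) {u v : EuclideanSpace ℂ (Fin N)}

theorem one_sub_inner_toFun_mul_one_sub_inner_krein (hu : (L.homogenization (1, u)).1 ≠ 0)
    (h0 : (L.homogenization (1, 0)).1 ≠ 0) (hv : (L.krein.homogenization (1, v)).1 ≠ 0) :
    (1 - ⟪v, L.toFun u⟫) * (1 - ⟪L.krein.toFun 0, u⟫) =
      (1 - ⟪v, L.toFun 0⟫) * (1 - ⟪L.krein.toFun v, u⟫) := by
  have hkrein (x y : EuclideanSpace ℂ (Fin N)) (hx : (L.homogenization (1, x)).1 ≠ 0)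
      (hy : (L.krein.homogenization (1, y)).1 ≠ 0) :
      (L.homogenization (1, x)).1 * (1 - ⟪y, L.toFun x⟫) =
        starRingEnd ℂ (L.krein.homogenization (1, y)).1 * (1 - ⟪L.krein.toFun y, x⟫) := by
    have h := kreinForm_homogenization L (1, x) (1, y)
    rw [← conj_kreinForm, ← conj_kreinForm _ (1, x), (starRingEnd ℂ).injective.eq_iff,
      kreinForm_eq_mul_one_sub_inner one_ne_zero hx, kreinForm_eq_mul_one_sub_inner hy one_ne_zero]
      at h
    simpa only [affinePoint_mk_one, affinePoint_homogenization_mk_one, map_one, one_mul, mul_one]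
      using h
  have h0' : (L.krein.homogenization (1, 0)).1 = starRingEnd ℂ (L.homogenization (1, 0)).1 := by
    simp [homogenization_mk_one, krein]
  have h0k : (L.krein.homogenization (1, 0)).1 ≠ 0 := by rwa [h0', map_ne_zero]
  have huv := hkrein u v hu hv
  have hu0 := hkrein u 0 hu h0k
  have h0v := hkrein 0 v h0 hv
  rw [inner_zero_left, sub_zero, mul_one, h0', Complex.conj_conj] at hu0
  rw [inner_zero_right, sub_zero, mul_one] at h0v
  refine mul_left_cancel₀ (mul_ne_zero h0 hu) ?_
  linear_combination (L.homogenization (1, 0)).1 * (1 - ⟪L.krein.toFun 0, u⟫) * huv -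
    (L.homogenization (1, u)).1 * (1 - ⟪L.krein.toFun v, u⟫) * h0v -
    starRingEnd ℂ (L.krein.homogenization (1, v)).1 * (1 - ⟪L.krein.toFun v, u⟫) * hu0

namespace IsSelfMap

theorem krein_mapsTo (h : L.IsSelfMap)
    (hden : ∀ z : EuclideanSpace ℂ (Fin N), ‖z‖ ≤ 1 → (L.homogenization (1, z)).1 ≠ 0) :
    MapsTo L.krein.toFun (Ball N) (Ball N) := fun v hv => by
  rw [← affinePoint_homogenization_mk_one]
  exact affinePoint_mem_ball (h.homogenization_krein_mem_positiveCone hden hv)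

theorem inner_kernel_toFun_sub (h : L.IsSelfMap)
    (hden : ∀ z : EuclideanSpace ℂ (Fin N), ‖z‖ ≤ 1 → (L.homogenization (1, z)).1 ≠ 0)
    (hu : u ∈ Ball N) (hv : v ∈ Ball N) :
    ⟪S.kernel (L.toFun u) - S.kernel (L.toFun 0), S.kernel v⟫ =
      ⟪S.kernel u, S.kernel (L.krein.toFun v) - S.kernel (L.krein.toFun 0)⟫ := by
  have h0 : (0 : EuclideanSpace ℂ (Fin N)) ∈ Ball N := mem_ball_self one_pos
  have hσ := h.krein_mapsTo hden
  have hlog := congrArg Complex.log <| one_sub_inner_toFun_mul_one_sub_inner_krein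
    (hden u (mem_ball_zero_iff.1 hu).le) (hden 0 (mem_ball_zero_iff.1 h0).le)
    (fst_ne_zero_of_mem_positiveCone (h.homogenization_krein_mem_positiveCone hden hv))
  have hv' := (mem_ball_zero_iff.1 hv).le
  have hσv := (mem_ball_zero_iff.1 (hσ hv)).le
  have hσ0 := (mem_ball_zero_iff.1 (hσ h0)).le
  rw [clog_mul_of_re_pos (re_one_sub_inner_pos hv' (h.2 hu)) (re_one_sub_inner_pos hσ0 hu),
    clog_mul_of_re_pos (re_one_sub_inner_pos hv' (h.2 h0)) (re_one_sub_inner_pos hσv hu)] at hlog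
  rw [inner_sub_left, inner_sub_right, S.inner_kernel (h.2 hu) hv, S.inner_kernel (h.2 h0) hv,
    S.inner_kernel hu (hσ hv), S.inner_kernel hu (hσ h0)]
  linear_combination -hlog

theorem exists_isCompositionOperator (h : L.IsSelfMap)
    (hden : ∀ z : EuclideanSpace ℂ (Fin N), ‖z‖ ≤ 1 → (L.homogenization (1, z)).1 ≠ 0)
    (hsup : supNorm L.toFun < 1) : ∃ Y, S.IsCompositionOperator L.toFun Y := by
  have h0 : (0 : EuclideanSpace ℂ (Fin N)) ∈ Ball N := mem_ball_self one_pos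
  have hσ := h.krein_mapsTo hden
  have hbound := norm_linearCombination_sub_le (k := fun w : Ball N => S.kernel w) (o := ⟨0, h0⟩)
    (η := fun u => ⟨_, h.2 u.2⟩) (σ := fun v => ⟨_, hσ v.2⟩)
    (fun u v => h.inner_kernel_toFun_sub S hden u.2 v.2)
    (fun u => S.norm_kernel_le hsup (norm_le_supNorm h.2 u.2))
  obtain ⟨X, -, hX⟩ := exists_clm_of_norm_linearCombination_le S.dense_span_kernel zero_le_one
    fun x => (hbound x).trans_eq (one_mul _).symm
  refine ⟨X + (innerSL ℂ (S.kernel (L.toFun 0))).smulRight (S.kernel 0),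
    DirichletSpace.isCompositionOperator_of_inner_kernel h.2 fun u hu v hv => ?_⟩
  rw [add_apply, hX ⟨v, hv⟩, inner_add_right, ← h.inner_kernel_toFun_sub S hden hu hv,
    ContinuousLinearMap.smulRight_apply, inner_smul_right, S.inner_kernel_kernel_zero hu,
    innerSL_apply_apply, inner_sub_left]
  ring

variable {S}

theorem isCompactOperator_of_supNorm_lt_one (h : L.IsSelfMap) {T : S.H →L[ℂ] S.H}
    (hT : S.IsCompositionOperator L.toFun T) (hsup : supNorm L.toFun < 1) :
    IsCompactOperator T := by
  have h0 : (0 : EuclideanSpace ℂ (Fin N)) ∈ Ball N := mem_ball_self one_pos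
  rcases h.forall_fst_homogenization_ne_zero_or_const with hden | hconst
  · obtain ⟨s, hs, hs1⟩ := exists_between hsup
    have hs0 : 0 < s := ((norm_nonneg _).trans (norm_le_supNorm h.2 h0)).trans_lt hs
    have hsc : (s : ℂ) ≠ 0 := Complex.ofReal_ne_zero.2 hs0.ne'
    have hnorm (z) (hz : z ∈ Ball N) : ‖(L.scale (s : ℂ)⁻¹).toFun z‖ ≤ supNorm L.toFun / s := by
      rw [toFun_scale, norm_smul, norm_inv, Complex.norm_of_nonneg hs0.le, inv_mul_eq_div]
      exact div_le_div_of_nonneg_right (norm_le_supNorm h.2 hz) hs0.le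
    have hlt : supNorm L.toFun / s < 1 := (div_lt_one hs0).2 hs
    have h' : (L.scale (s : ℂ)⁻¹).IsSelfMap :=
      ⟨h.1, fun z hz => mem_ball_zero_iff.2 ((hnorm z hz).trans_lt hlt)⟩
    obtain ⟨Y, hY⟩ := h'.exists_isCompositionOperator S hden ((supNorm_le hnorm).trans_lt hlt)
    obtain ⟨D, hDcompact, hD⟩ := S.exists_isCompactOperator_isCompositionOperator_smul (c := s)
      (by rwa [Complex.norm_of_nonneg hs0.le])
    rw [hT.eq (hD.comp hY h'.2) fun z _ => by
      rw [Function.comp_apply, toFun_scale, smul_inv_smul₀ hsc]]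
    exact hDcompact.clm_comp Y
  · have hrank : IsCompactOperator (innerSL ℂ (S.kernel (L.toFun 0))) :=
      isCompactOperator_of_locallyCompactSpace_dom _
    rw [hT.eq (S.isCompositionOperator_const (h.2 h0)) hconst]
    exact hrank.clm_comp ((ContinuousLinearMap.id ℂ ℂ).smulRight (S.kernel 0))

end IsSelfMap

end BallLFT

/-! ### Differences of kernels along a parabolic flow -/

namespace DirichletSpace

variable {N : ℕ} (S : DirichletSpace N) {a b c d ζ : EuclideanSpace ℂ (Fin N)}
  {p q p' q' : ℂ × EuclideanSpace ℂ (Fin N)}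

variable {S} in
theorem one_sub_inner_mul_eq_of_kernel_add_eq (ha : a ∈ Ball N) (hb : b ∈ Ball N)
    (hc : c ∈ Ball N) (hd : d ∈ Ball N)
    (h : S.kernel a + S.kernel b = S.kernel c + S.kernel d)
    {x : EuclideanSpace ℂ (Fin N)} (hx : x ∈ Ball N) :
    (1 - ⟪a, x⟫) * (1 - ⟪b, x⟫) = (1 - ⟪c, x⟫) * (1 - ⟪d, x⟫) := by
  have hne {w : EuclideanSpace ℂ (Fin N)} (hw : w ∈ Ball N) : 1 - ⟪w, x⟫ ≠ 0 := fun h0 => by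
    simpa [h0] using re_one_sub_inner_pos (mem_ball_zero_iff.1 hw).le hx
  have hlog := congrArg (fun f => ⟪S.kernel x, f⟫) h
  simp only [inner_add_right, S.inner_kernel hx, ha, hb, hc, hd] at hlog
  rw [← Complex.exp_log (hne ha), ← Complex.exp_log (hne hb), ← Complex.exp_log (hne hc),
    ← Complex.exp_log (hne hd), ← Complex.exp_add, ← Complex.exp_add]
  congr 1
  linear_combination -hlog

variable {S} in
theorem eq_or_eq_of_kernel_add_eq (ha : a ∈ Ball N) (hb : b ∈ Ball N) (hc : c ∈ Ball N)
    (hd : d ∈ Ball N) (h : S.kernel a + S.kernel b = S.kernel c + S.kernel d) :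
    a = c ∨ a = d := by
  have hball {x : EuclideanSpace ℂ (Fin N)} (hx : x ∈ Ball N) :
      ⟪a - c, x⟫ * ⟪a - d, x⟫ = 0 := by
    have hpos := one_sub_inner_mul_eq_of_kernel_add_eq ha hb hc hd h hx
    have hneg := one_sub_inner_mul_eq_of_kernel_add_eq ha hb hc hd h (x := -x) (by simpa using hx)
    simp only [inner_neg_right] at hneg
    rw [inner_sub_left, inner_sub_left]
    linear_combination (-(1 + ⟪a, x⟫) / 2) * hpos + ((⟪a, x⟫ - 1) / 2) * hneg
  rw [← sub_eq_zero, ← sub_eq_zero (b := d)]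
  refine eq_zero_or_eq_zero_of_forall_inner_mul_inner (𝕜 := ℂ) fun x => ?_
  have hr : (0 : ℝ) < (‖x‖ + 1)⁻¹ := by positivity
  have hscaled := hball (x := (((‖x‖ + 1)⁻¹ : ℝ) : ℂ) • x) <| by
    rw [mem_ball_zero_iff, norm_smul, Complex.norm_real, Real.norm_of_nonneg hr.le,
      inv_mul_lt_iff₀ (by positivity)]
    linarith
  have hrc : (((‖x‖ + 1)⁻¹ : ℝ) : ℂ) ≠ 0 := Complex.ofReal_ne_zero.2 hr.ne'
  rw [inner_smul_right, inner_smul_right, mul_mul_mul_comm] at hscaled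
  exact (mul_eq_zero.1 hscaled).resolve_left (mul_ne_zero hrc hrc)

theorem kernel_injOn : InjOn S.kernel (Ball N) := fun a ha c hc h =>
  or_self_iff.1 (eq_or_eq_of_kernel_add_eq ha ha hc hc (by rw [h]))

/-- The difference of the reproducing kernels at two points given by homogeneous coordinates. The
normalizations of the coordinates cancel in the inner products of such differences. -/
def kernelDiff (p q : ℂ × EuclideanSpace ℂ (Fin N)) : S.H :=
  S.kernel (affinePoint p) - S.kernel (affinePoint q)

theorem re_inner_kernel_affinePoint (hp : p ∈ positiveCone _) (hq : q ∈ positiveCone _) :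
    (⟪S.kernel (affinePoint p), S.kernel (affinePoint q)⟫).re =
      1 + Real.log ‖p.1‖ + Real.log ‖q.1‖ - Real.log ‖kreinForm p q‖ := by
  have hp1 := fst_ne_zero_of_mem_positiveCone hp
  have hq1 := fst_ne_zero_of_mem_positiveCone hq
  have hform := kreinForm_ne_zero_of_mem_positiveCone hq hp
  rw [kreinForm_eq_mul_one_sub_inner hq1 hp1] at hform
  rw [S.re_inner_kernel (affinePoint_mem_ball hp) (affinePoint_mem_ball hq), ← conj_kreinForm,
    RCLike.norm_conj, kreinForm_eq_mul_one_sub_inner hq1 hp1, norm_mul, norm_mul, RCLike.norm_conj,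
    Real.log_mul (by simp [hp1, hq1]) (norm_ne_zero_iff.2 (right_ne_zero_of_mul hform)),
    Real.log_mul (norm_ne_zero_iff.2 hq1) (norm_ne_zero_iff.2 hp1)]
  ring

theorem re_inner_kernelDiff (hp : p ∈ positiveCone _) (hq : q ∈ positiveCone _)
    (hp' : p' ∈ positiveCone _) (hq' : q' ∈ positiveCone _) :
    (⟪S.kernelDiff p q, S.kernelDiff p' q'⟫).re =
      Real.log ‖kreinForm p q'‖ + Real.log ‖kreinForm q p'‖ -
        Real.log ‖kreinForm p p'‖ - Real.log ‖kreinForm q q'‖ := by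
  simp only [kernelDiff, inner_sub_left, inner_sub_right, Complex.sub_re,
    S.re_inner_kernel_affinePoint, hp, hq, hp', hq']
  ring

theorem norm_kernelDiff_sq (hp : p ∈ positiveCone _) (hq : q ∈ positiveCone _) :
    ‖S.kernelDiff p q‖ ^ 2 = Real.log ‖kreinForm p q‖ + Real.log ‖kreinForm q p‖ -
      Real.log ‖kreinForm p p‖ - Real.log ‖kreinForm q q‖ := by
  rw [← inner_self_eq_norm_sq (𝕜 := ℂ)]
  exact S.re_inner_kernelDiff hp hq hp hq

theorem norm_kernelDiff_congr {P : Type*} {f g : P → ℂ × EuclideanSpace ℂ (Fin N)} {x y : P}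
    (hfg : ∀ u v, kreinForm (f u) (f v) = kreinForm (g u) (g v))
    (hfx : f x ∈ positiveCone _) (hfy : f y ∈ positiveCone _)
    (hgx : g x ∈ positiveCone _) (hgy : g y ∈ positiveCone _) :
    ‖S.kernelDiff (f x) (f y)‖ = ‖S.kernelDiff (g x) (g y)‖ := by
  rw [← sq_eq_sq₀ (norm_nonneg _) (norm_nonneg _), S.norm_kernelDiff_sq hfx hfy,
    S.norm_kernelDiff_sq hgx hgy]
  simp only [hfg]

theorem tendsto_re_inner_kernelDiff {ι : Type*} {l : Filter ι} {g : ι → ℂ} {u v u' v' : ℂ}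
    {p q p' q' : ι → ℂ × EuclideanSpace ℂ (Fin N)}
    (hp : ∀ i, p i ∈ positiveCone _) (hq : ∀ i, q i ∈ positiveCone _)
    (hp' : ∀ i, p' i ∈ positiveCone _) (hq' : ∀ i, q' i ∈ positiveCone _)
    (hu : u ≠ 0) (hv : v ≠ 0) (hu' : u' ≠ 0) (hv' : v' ≠ 0)
    (hpp : Tendsto (fun i => kreinForm (p i) (p' i) / g i) l (𝓝 (u * u')))
    (hpq : Tendsto (fun i => kreinForm (p i) (q' i) / g i) l (𝓝 (u * v')))
    (hqp : Tendsto (fun i => kreinForm (q i) (p' i) / g i) l (𝓝 (v * u')))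
    (hqq : Tendsto (fun i => kreinForm (q i) (q' i) / g i) l (𝓝 (v * v'))) :
    Tendsto (fun i => (⟪S.kernelDiff (p i) (q i), S.kernelDiff (p' i) (q' i)⟫).re) l (𝓝 0) := by
  have hlog {f : ι → ℂ} {x y : ℂ} (hx : x ≠ 0) (hy : y ≠ 0) (hf : Tendsto f l (𝓝 (x * y))) :
      Tendsto (fun i => Real.log ‖f i‖) l (𝓝 (Real.log ‖x‖ + Real.log ‖y‖)) := by
    rw [← Real.log_mul (norm_ne_zero_iff.2 hx) (norm_ne_zero_iff.2 hy), ← norm_mul]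
    exact hf.norm.log (norm_ne_zero_iff.2 (mul_ne_zero hx hy))
  have hlim := (((hlog hu hv' hpq).add (hlog hv hu' hqp)).sub (hlog hu hu' hpp)).sub
    (hlog hv hv' hqq)
  refine (hlim.congr' ?_).trans_eq (by ring_nf)
  filter_upwards [hpp.eventually_ne (mul_ne_zero hu hu')] with i hi
  have hg : ‖g i‖ ≠ 0 := fun h => hi (by rw [norm_eq_zero.1 h, div_zero])
  have hform {r r' : ℂ × EuclideanSpace ℂ (Fin N)} (hr : r ∈ positiveCone _)
      (hr' : r' ∈ positiveCone _) : ‖kreinForm r r'‖ ≠ 0 :=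
    norm_ne_zero_iff.2 (kreinForm_ne_zero_of_mem_positiveCone hr hr')
  rw [S.re_inner_kernelDiff (hp i) (hq i) (hp' i) (hq' i)]
  simp only [norm_div]
  rw [Real.log_div (hform (hp i) (hq' i)) hg, Real.log_div (hform (hq i) (hp' i)) hg,
    Real.log_div (hform (hp i) (hp' i)) hg, Real.log_div (hform (hq i) (hq' i)) hg]
  ring

theorem tendsto_inner_kernelDiff_parabolic (hζ : ‖ζ‖ = 1) (hp : p ∈ positiveCone _)
    (hq : q ∈ positiveCone _) (f : S.H) :
    Tendsto (fun t => ⟪f, S.kernelDiff (parabolic ζ t p) (parabolic ζ t q)⟫) atTop (𝓝 0) := by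
  refine tendsto_inner_of_dense_span (C := ‖S.kernelDiff p q‖) (fun t => ?_) S.dense_span_kernel
    ?_ f
  · exact (S.norm_kernelDiff_congr (g := id) (kreinForm_parabolic hζ t)
      (parabolic_mem_positiveCone hζ t hp) (parabolic_mem_positiveCone hζ t hq) hp hq).le
  rintro _ ⟨⟨w, hw⟩, rfl⟩
  have hlim {r : ℂ × EuclideanSpace ℂ (Fin N)} (hr : r ∈ positiveCone _) :
      Tendsto (fun t => ⟪S.kernel w, S.kernel (affinePoint (parabolic ζ t r))⟫) atTop
        (𝓝 (1 - Complex.log (1 - ⟪ζ, w⟫))) := by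
    have hcont : ContinuousAt (fun z => 1 - Complex.log (1 - ⟪z, w⟫)) ζ :=
      continuousAt_const.sub
        (ContinuousAt.clog (by fun_prop) (Or.inl (re_one_sub_inner_pos hζ.le hw)))
    refine (hcont.tendsto.comp (tendsto_affinePoint_parabolic hζ hr)).congr fun t => ?_
    exact (S.inner_kernel hw (affinePoint_mem_ball (parabolic_mem_positiveCone hζ t hr))).symm
  simpa only [kernelDiff, inner_sub_right, sub_self] using (hlim hp).sub (hlim hq)

variable {S} {T : S.H →L[ℂ] S.H} {L : BallLFT N}

theorem IsCompositionOperator.adjoint_kernelDiff (hL : L.IsSelfMap)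
    (hT : S.IsCompositionOperator L.toFun T) (hp : p ∈ positiveCone _)
    (hq : q ∈ positiveCone _) :
    ContinuousLinearMap.adjoint T (S.kernelDiff p q) =
      S.kernelDiff (L.homogenization p) (L.homogenization q) := by
  rw [kernelDiff, map_sub, hT.adjoint_kernel hL.2 (affinePoint_mem_ball hp),
    hT.adjoint_kernel hL.2 (affinePoint_mem_ball hq),
    ← BallLFT.affinePoint_homogenization (fst_ne_zero_of_mem_positiveCone hp),
    ← BallLFT.affinePoint_homogenization (fst_ne_zero_of_mem_positiveCone hq), kernelDiff]

end DirichletSpace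

/-! ### Necessity -/

namespace BallLFT

variable {N : ℕ} {S : DirichletSpace N} {L L₁ L₂ : BallLFT N} {T₁ T₂ : S.H →L[ℂ] S.H}
  {ζ η : EuclideanSpace ℂ (Fin N)} {d₁ d₂ k₁ k₂ : ℂ} {p q : ℂ × EuclideanSpace ℂ (Fin N)}

/-- The kernel difference `K_{φ(z)} - K_{φ(w)}`, where `z` and `w` are the points which the
parabolic flow at `ζ` reaches at time `t` from `p` and `q`. -/
def flowDiff (L : BallLFT N) (S : DirichletSpace N) (ζ : EuclideanSpace ℂ (Fin N))
    (p q : ℂ × EuclideanSpace ℂ (Fin N)) (t : ℝ) : S.H :=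
  S.kernelDiff (L.homogenization (parabolic ζ t p)) (L.homogenization (parabolic ζ t q))

theorem IsSelfMap.homogenization_parabolic_mem_positiveCone (h : L.IsSelfMap) (hζ : ‖ζ‖ = 1)
    (t : ℝ) (hp : p ∈ positiveCone _) : L.homogenization (parabolic ζ t p) ∈ positiveCone _ :=
  h.homogenization_mem_positiveCone (parabolic_mem_positiveCone hζ t hp)

theorem flowDiff_zero_mk_one (L : BallLFT N) (S : DirichletSpace N)
    (ζ z w : EuclideanSpace ℂ (Fin N)) :
    L.flowDiff S ζ (1, z) (1, w) 0 = S.kernel (L.toFun z) - S.kernel (L.toFun w) := by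
  rw [flowDiff, parabolic_zero, parabolic_zero, DirichletSpace.kernelDiff,
    affinePoint_homogenization_mk_one, affinePoint_homogenization_mk_one]

theorem IsSelfMap.norm_flowDiff (h : L.IsSelfMap) (hζ : ‖ζ‖ = 1) (hη : ‖η‖ = 1)
    (hL : L.IsContact ζ η d₁ k₁) (hp : p ∈ positiveCone _) (hq : q ∈ positiveCone _) (t : ℝ) :
    ‖L.flowDiff S ζ p q t‖ = ‖L.flowDiff S ζ p q 0‖ := by
  have hmem (s : ℝ) {r} := h.homogenization_parabolic_mem_positiveCone (p := r) hζ s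
  refine S.norm_kernelDiff_congr (f := fun r => L.homogenization (parabolic ζ t r))
    (g := fun r => L.homogenization (parabolic ζ 0 r)) (fun u v => ?_)
    (hmem t hp) (hmem t hq) (hmem 0 hp) (hmem 0 hq)
  simp only [h.kreinForm_homogenization_parabolic_self hζ hη hL]

theorem tendsto_flowDiff_sub_flowDiff (h₁ : L₁.IsSelfMap) (h₂ : L₂.IsSelfMap)
    (hT₁ : S.IsCompositionOperator L₁.toFun T₁) (hT₂ : S.IsCompositionOperator L₂.toFun T₂)
    (hK : IsCompactOperator ⇑(T₁ - T₂)) (hζ : ‖ζ‖ = 1) (hp : p ∈ positiveCone _)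
    (hq : q ∈ positiveCone _) :
    Tendsto (fun t => L₁.flowDiff S ζ p q t - L₂.flowDiff S ζ p q t) atTop (𝓝 0) := by
  have hp' (t : ℝ) := parabolic_mem_positiveCone hζ t hp
  have hq' (t : ℝ) := parabolic_mem_positiveCone hζ t hq
  refine (tendsto_adjoint_of_isCompactOperator hK (C := ‖S.kernelDiff p q‖) (fun t => ?_)
    (S.tendsto_inner_kernelDiff_parabolic hζ hp hq)).congr fun t => ?_
  · exact (S.norm_kernelDiff_congr (g := id) (kreinForm_parabolic hζ t) (hp' t) (hq' t) hp hq).le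
  · rw [map_sub, sub_apply, hT₁.adjoint_kernelDiff h₁ (hp' t) (hq' t),
      hT₂.adjoint_kernelDiff h₂ (hp' t) (hq' t)]
    rfl

theorem IsSelfMap.toFun_eq_toFun_zero_of_tendsto_kreinForm_div
    (h₁ : L₁.IsSelfMap) (h₂ : L₂.IsSelfMap)
    (hT₁ : S.IsCompositionOperator L₁.toFun T₁) (hT₂ : S.IsCompositionOperator L₂.toFun T₂)
    (hK : IsCompactOperator ⇑(T₁ - T₂)) (hζ : ‖ζ‖ = 1) (hη : ‖η‖ = 1)
    (hL₁ : L₁.IsContact ζ η d₁ k₁) {g : ℝ → ℂ} {c : ℂ} (hc : c ≠ 0)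
    (hg : ∀ p q, Tendsto (fun t : ℝ => kreinForm (L₁.homogenization (parabolic ζ t p))
      (L₂.homogenization (parabolic ζ t q)) / g t) atTop
      (𝓝 (kreinForm p (1, ζ) * (kreinForm (1, ζ) q * c)))) :
    ∀ z ∈ Ball N, L₁.toFun z = L₁.toFun 0 := fun z hz => by
  have hp := mk_one_mem_positiveCone hz
  have hq := mk_one_mem_positiveCone (mem_ball_self (x := (0 : EuclideanSpace ℂ (Fin N))) one_pos)
  have hright {r} (hr : r ∈ positiveCone _) := kreinForm_mk_one_ne_zero hζ hr
  have hleft {r} (hr : r ∈ positiveCone _) : kreinForm r (1, ζ) ≠ 0 := by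
    rw [← conj_kreinForm, map_ne_zero]
    exact hright hr
  have hinner := S.tendsto_re_inner_kernelDiff
    (fun t => h₁.homogenization_parabolic_mem_positiveCone hζ t hp)
    (fun t => h₁.homogenization_parabolic_mem_positiveCone hζ t hq)
    (fun t => h₂.homogenization_parabolic_mem_positiveCone hζ t hp)
    (fun t => h₂.homogenization_parabolic_mem_positiveCone hζ t hq)
    (hleft hp) (hleft hq) (mul_ne_zero (hright hp) hc) (mul_ne_zero (hright hq) hc)
    (hg _ _) (hg _ _) (hg _ _) (hg _ _)
  have hnull := tendsto_zero_of_tendsto_sub_of_tendsto_re_inner (𝕜 := ℂ)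
    (tendsto_flowDiff_sub_flowDiff h₁ h₂ hT₁ hT₂ hK hζ hp hq) hinner
  have hzero : L₁.flowDiff S ζ (1, z) (1, 0) 0 = 0 := by
    have hnorm := hnull.norm
    simp only [h₁.norm_flowDiff hζ hη hL₁ hp hq, norm_zero] at hnorm
    exact norm_eq_zero.1 (tendsto_nhds_unique tendsto_const_nhds hnorm)
  rw [flowDiff_zero_mk_one, sub_eq_zero] at hzero
  exact S.kernel_injOn (h₁.2 hz) (h₁.2 (mem_ball_self one_pos)) hzero

theorem IsSelfMap.flowDiff_eq_of_isContact (h₁ : L₁.IsSelfMap) (h₂ : L₂.IsSelfMap)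
    (hT₁ : S.IsCompositionOperator L₁.toFun T₁) (hT₂ : S.IsCompositionOperator L₂.toFun T₂)
    (hK : IsCompactOperator ⇑(T₁ - T₂)) (hζ : ‖ζ‖ = 1) (hη : ‖η‖ = 1)
    (hL₁ : L₁.IsContact ζ η d₁ k₁) (hL₂ : L₂.IsContact ζ η d₂ k₂)
    (hκ : k₁ * d₂ - starRingEnd ℂ (k₂ * d₁) = 0) (hp : p ∈ positiveCone _)
    (hq : q ∈ positiveCone _) : L₁.flowDiff S ζ p q 0 = L₂.flowDiff S ζ p q 0 := by
  have hmem₁ (t : ℝ) {r} := h₁.homogenization_parabolic_mem_positiveCone (p := r) hζ t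
  have hmem₂ (t : ℝ) {r} := h₂.homogenization_parabolic_mem_positiveCone (p := r) hζ t
  have hinner (t : ℝ) : (⟪L₁.flowDiff S ζ p q t, L₂.flowDiff S ζ p q t⟫).re =
      (⟪L₁.flowDiff S ζ p q 0, L₂.flowDiff S ζ p q 0⟫).re := by
    simp only [flowDiff, S.re_inner_kernelDiff, hmem₁, hmem₂, hp, hq,
      kreinForm_homogenization_parabolic_of_isContact hη hL₁ hL₂, hκ, mul_zero, add_zero]
  have hnorm (t : ℝ) : ‖L₁.flowDiff S ζ p q t - L₂.flowDiff S ζ p q t‖ ^ 2 =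
      ‖L₁.flowDiff S ζ p q 0 - L₂.flowDiff S ζ p q 0‖ ^ 2 := by
    rw [norm_sub_sq (𝕜 := ℂ), norm_sub_sq (𝕜 := ℂ), h₁.norm_flowDiff hζ hη hL₁ hp hq,
      h₂.norm_flowDiff hζ hη hL₂ hp hq]
    simp only [RCLike.re_to_complex, hinner t]
  have hlim := (tendsto_flowDiff_sub_flowDiff h₁ h₂ hT₁ hT₂ hK hζ hp hq).norm.pow 2
  simp only [hnorm, norm_zero] at hlim
  simpa [sub_eq_zero] using tendsto_nhds_unique tendsto_const_nhds hlim

theorem IsSelfMap.toFun_eq_toFun_zero_of_flowDiff_eq (h₁ : L₁.IsSelfMap) (h₂ : L₂.IsSelfMap)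
    (hne : ¬ EqOn L₁.toFun L₂.toFun (Ball N))
    (hdiff : ∀ p ∈ positiveCone _, ∀ q ∈ positiveCone _,
      L₁.flowDiff S ζ p q 0 = L₂.flowDiff S ζ p q 0) :
    ∀ z ∈ Ball N, L₁.toFun z = L₁.toFun 0 := by
  simp only [EqOn, not_forall] at hne
  obtain ⟨x, hx, hx12⟩ := hne
  have hconst {w} (hw : w ∈ Ball N) : L₁.toFun x = L₁.toFun w := by
    have hdiffw := hdiff _ (mk_one_mem_positiveCone hx) _ (mk_one_mem_positiveCone hw)
    rw [flowDiff_zero_mk_one, flowDiff_zero_mk_one, sub_eq_sub_iff_add_eq_add] at hdiffw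
    exact (DirichletSpace.eq_or_eq_of_kernel_add_eq (h₁.2 hx) (h₂.2 hw) (h₂.2 hx) (h₁.2 hw)
      hdiffw).resolve_left hx12
  exact fun z hz => (hconst hz).symm.trans (hconst (mem_ball_self one_pos))

theorem tendsto_kreinForm_homogenization_parabolic_div_sq (L₁ L₂ : BallLFT N)
    (ζ : EuclideanSpace ℂ (Fin N)) (p q : ℂ × EuclideanSpace ℂ (Fin N)) :
    Tendsto (fun t : ℝ => kreinForm (L₁.homogenization (parabolic ζ t p))
      (L₂.homogenization (parabolic ζ t q)) / (t : ℂ) ^ 2) atTop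
      (𝓝 (kreinForm p (1, ζ) * (kreinForm (1, ζ) q *
        kreinForm (L₁.homogenization (1, ζ)) (L₂.homogenization (1, ζ))))) := by
  simp only [kreinForm_homogenization_parabolic, ← mul_assoc (kreinForm p (1, ζ))]
  exact tendsto_add_ofReal_mul_add_sq_mul_div_sq _ _ _

theorem tendsto_kreinForm_homogenization_parabolic_div (hη : ‖η‖ = 1)
    (h₁ : L₁.IsContact ζ η d₁ k₁) (h₂ : L₂.IsContact ζ η d₂ k₂)
    (p q : ℂ × EuclideanSpace ℂ (Fin N)) :
    Tendsto (fun t : ℝ => kreinForm (L₁.homogenization (parabolic ζ t p))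
      (L₂.homogenization (parabolic ζ t q)) / t) atTop
      (𝓝 (kreinForm p (1, ζ) * (kreinForm (1, ζ) q *
        (Complex.I * (k₁ * d₂ - starRingEnd ℂ (k₂ * d₁)))))) := by
  simp only [kreinForm_homogenization_parabolic_of_isContact hη h₁ h₂,
    ← mul_assoc (kreinForm p (1, ζ))]
  exact tendsto_add_ofReal_mul_div _ _

theorem IsSelfMap.toFun_eq_toFun_zero_of_isContact (h₁ : L₁.IsSelfMap) (h₂ : L₂.IsSelfMap)
    (hT₁ : S.IsCompositionOperator L₁.toFun T₁) (hT₂ : S.IsCompositionOperator L₂.toFun T₂)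
    (hK : IsCompactOperator ⇑(T₁ - T₂)) (hne : ¬ EqOn L₁.toFun L₂.toFun (Ball N))
    (hζ : ‖ζ‖ = 1) (hη : ‖η‖ = 1) (hL₁ : L₁.IsContact ζ η d₁ k₁) (hd₁ : d₁ ≠ 0) :
    ∀ z ∈ Ball N, L₁.toFun z = L₁.toFun 0 := by
  by_cases hQ : kreinForm (L₁.homogenization (1, ζ)) (L₂.homogenization (1, ζ)) = 0
  · rw [hL₁.homogenization_eq, map_smulₛₗ, LinearMap.smul_apply, smul_eq_zero, map_eq_zero] at hQ
    obtain ⟨d₂, k₂, hL₂⟩ := h₂.exists_isContact hζ hη (hQ.resolve_left hd₁)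
    by_cases hκ : k₁ * d₂ - starRingEnd ℂ (k₂ * d₁) = 0
    · exact h₁.toFun_eq_toFun_zero_of_flowDiff_eq h₂ hne fun p hp q hq =>
        h₁.flowDiff_eq_of_isContact h₂ hT₁ hT₂ hK hζ hη hL₁ hL₂ hκ hp hq
    · exact h₁.toFun_eq_toFun_zero_of_tendsto_kreinForm_div h₂ hT₁ hT₂ hK hζ hη hL₁
        (mul_ne_zero Complex.I_ne_zero hκ)
        (tendsto_kreinForm_homogenization_parabolic_div hη hL₁ hL₂)
  · exact h₁.toFun_eq_toFun_zero_of_tendsto_kreinForm_div h₂ hT₁ hT₂ hK hζ hη hL₁ hQ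
      (tendsto_kreinForm_homogenization_parabolic_div_sq L₁ L₂ ζ)

theorem IsSelfMap.supNorm_lt_one_of_const (h : L.IsSelfMap)
    (hconst : ∀ z ∈ Ball N, L.toFun z = L.toFun 0) : supNorm L.toFun < 1 :=
  (supNorm_le fun z hz => (congrArg norm (hconst z hz)).le).trans_lt
    (mem_ball_zero_iff.1 (h.2 (mem_ball_self one_pos)))

theorem IsSelfMap.supNorm_lt_one_or_exists_isContact (h : L.IsSelfMap) :
    supNorm L.toFun < 1 ∨ ∃ ζ η d k, ‖ζ‖ = 1 ∧ ‖η‖ = 1 ∧ L.IsContact ζ η d k ∧ d ≠ 0 := by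
  rcases h.forall_fst_homogenization_ne_zero_or_const with hden | hconst
  swap
  · exact .inl (h.supNorm_lt_one_of_const hconst)
  obtain ⟨ζ, hζ, hmax⟩ := (isCompact_closedBall _ _).exists_isMaxOn
    (nonempty_closedBall.2 zero_le_one) (continuousOn_toFun hden).norm
  rw [mem_closedBall_zero_iff] at hζ
  rcases (h.norm_toFun_le_one hζ).lt_or_eq with hlt | hη
  · exact .inl ((supNorm_le fun z hz => hmax (ball_subset_closedBall hz)).trans_lt hlt)
  have hζ1 : ‖ζ‖ = 1 := hζ.antisymm <| not_lt.1 fun hlt =>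
    (mem_ball_zero_iff.1 (h.2 (mem_ball_zero_iff.2 hlt))).ne hη
  have himage : L.homogenization (1, ζ) = (L.homogenization (1, ζ)).1 • (1, L.toFun ζ) := by
    rw [← affinePoint_homogenization_mk_one, smul_mk_one_affinePoint (hden ζ hζ)]
  obtain ⟨d, k, hL⟩ := h.exists_isContact hζ1 hη <| by
    rw [himage, map_smul, kreinForm_mk_one_self hη, smul_zero]
  refine .inr ⟨ζ, L.toFun ζ, d, k, hζ1, hη, hL, fun hd => hden ζ hζ ?_⟩
  rw [hL.homogenization_eq, hd, zero_smul, Prod.fst_zero]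

theorem IsSelfMap.supNorm_lt_one_of_isCompactOperator_sub (h₁ : L₁.IsSelfMap) (h₂ : L₂.IsSelfMap)
    (hT₁ : S.IsCompositionOperator L₁.toFun T₁) (hT₂ : S.IsCompositionOperator L₂.toFun T₂)
    (hK : IsCompactOperator ⇑(T₁ - T₂)) (hne : ¬ EqOn L₁.toFun L₂.toFun (Ball N)) :
    supNorm L₁.toFun < 1 := by
  rcases h₁.supNorm_lt_one_or_exists_isContact with hsup | ⟨ζ, η, d, k, hζ, hη, hL₁, hd⟩
  · exact hsup
  · exact h₁.supNorm_lt_one_of_const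
      (h₁.toFun_eq_toFun_zero_of_isContact h₂ hT₁ hT₂ hK hne hζ hη hL₁ hd)

end BallLFT

/-- Let `φ, ψ` be linear fractional self-maps of `B_N`.  Then `C_φ - C_ψ`
is compact on the Dirichlet space `𝒟(B_N)` if and only if `φ = ψ` (on `B_N`) or both `C_φ`
and `C_ψ` are compact; equivalently, `φ = ψ` or both `‖φ‖_∞ < 1` and `‖ψ‖_∞ < 1`. -/
theorem dirichlet_difference_compact_iff
    (N : ℕ) (S : DirichletSpace N)
    (φ ψ : BallLFT N) (hφ : φ.IsSelfMap) (hψ : ψ.IsSelfMap)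
    (Cφ Cψ : S.H →L[ℂ] S.H)
    (hCφ : S.IsCompositionOperator φ.toFun Cφ) (hCψ : S.IsCompositionOperator ψ.toFun Cψ) :
    (IsCompactOperator ⇑(Cφ - Cψ) ↔
      (Set.EqOn φ.toFun ψ.toFun (Ball N) ∨
        (IsCompactOperator ⇑Cφ ∧ IsCompactOperator ⇑Cψ))) ∧
    (IsCompactOperator ⇑(Cφ - Cψ) ↔
      (Set.EqOn φ.toFun ψ.toFun (Ball N) ∨
        (supNorm φ.toFun < 1 ∧ supNorm ψ.toFun < 1))) := by
  have hsup (h : IsCompactOperator ⇑(Cφ - Cψ)) :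
      EqOn φ.toFun ψ.toFun (Ball N) ∨ (supNorm φ.toFun < 1 ∧ supNorm ψ.toFun < 1) := by
    refine or_iff_not_imp_left.2 fun hne => ⟨?_, ?_⟩
    · exact hφ.supNorm_lt_one_of_isCompactOperator_sub hψ hCφ hCψ h hne
    · have hneg : IsCompactOperator ⇑(Cψ - Cφ) := by simpa using h.neg
      exact hψ.supNorm_lt_one_of_isCompactOperator_sub hφ hCψ hCφ hneg fun heq => hne heq.symm
  have hcompact (h : supNorm φ.toFun < 1 ∧ supNorm ψ.toFun < 1) :
      IsCompactOperator ⇑Cφ ∧ IsCompactOperator ⇑Cψ :=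
    ⟨hφ.isCompactOperator_of_supNorm_lt_one hCφ h.1,
      hψ.isCompactOperator_of_supNorm_lt_one hCψ h.2⟩
  have hdiff (h : EqOn φ.toFun ψ.toFun (Ball N) ∨ (IsCompactOperator ⇑Cφ ∧ IsCompactOperator ⇑Cψ)) :
      IsCompactOperator ⇑(Cφ - Cψ) := by
    rcases h with heq | ⟨h₁, h₂⟩
    · rw [hCφ.eq hCψ heq, sub_self]
      exact isCompactOperator_zero
    · exact h₁.sub h₂
  exact ⟨⟨fun h => (hsup h).imp_right hcompact, hdiff⟩,
    ⟨hsup, fun h => hdiff (h.imp_right hcompact)⟩⟩
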